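/- arXiv:2407.01341 — 2 statements merged into one kernel-verified Lean document; each statement's English description precedes it below -/
import Mathlib

section
/- There exists a dimensional constant Λ > 0 such that: if Ω ⊂ ℝ² is an open bounded convex set with diameter D, width w ≤ (√3/2)D, and first two Dirichlet eigenfunctions u₁, u₂, and ω is a cell of a u₁²-weighted L² equipartition of ū = u₂/u₁ in Ω composed of n cells, then, in an orthogonal coordinate system in which a diameter of Ω is the horizontal segment (−D/2, D/2) × {0}, the vertical sections ω_{x₁} := ω ∩ ({x₁} × ℝ) satisfy sup_{x₁ ∈ (−D/2, D/2)} ℋ¹(ω_{x₁}) ≥ Λ w/n. -/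
open MeasureTheory Real Set Filter Bornology
open scoped ENNReal RealInnerProductSpace

noncomputable section

/-- Dirichlet Rayleigh quotient of `u` on `Ω ⊆ ℝ^N`. -/
def dRayleigh {N : ℕ} (Ω : Set (EuclideanSpace ℝ (Fin N)))
    (u : EuclideanSpace ℝ (Fin N) → ℝ) : ℝ≥0∞ :=
  (∫⁻ x in Ω, ENNReal.ofReal (‖fderiv ℝ u x‖ ^ 2)) /
    ∫⁻ x in Ω, ENNReal.ofReal ((u x) ^ 2)

/-- The `k`-th Dirichlet Laplacian eigenvalue of `Ω`, via the Courant–Fischer min-max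
over `k`-dimensional subspaces of (a core of) `H¹₀(Ω)`. -/
def dirEV {N : ℕ} (Ω : Set (EuclideanSpace ℝ (Fin N))) (k : ℕ) : ℝ≥0∞ :=
  ⨅ (S : Submodule ℝ (EuclideanSpace ℝ (Fin N) → ℝ))
    (_ : Module.finrank ℝ S = k ∧ ∀ u ∈ S, ContDiff ℝ 1 u ∧ tsupport u ⊆ Ω),
    ⨆ (u : EuclideanSpace ℝ (Fin N) → ℝ) (_ : u ∈ S ∧ u ≠ 0), dRayleigh Ω u

/-- Weighted Rayleigh quotient of `u` on `Ω` with weight `p`. -/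
def wRayleigh {N : ℕ} (Ω : Set (EuclideanSpace ℝ (Fin N)))
    (p u : EuclideanSpace ℝ (Fin N) → ℝ) : ℝ≥0∞ :=
  (∫⁻ x in Ω, ENNReal.ofReal (‖fderiv ℝ u x‖ ^ 2 * p x)) /
    ∫⁻ x in Ω, ENNReal.ofReal ((u x) ^ 2 * p x)

/-- Admissibility of `u` for the weighted Neumann eigenvalue `μ₁(Ω, p)`:
`u ∈ H¹_loc(Ω) ∩ L²(Ω, p dx)`, `u ≠ 0`, with zero `p`-mean. -/
def wAdm {N : ℕ} (Ω : Set (EuclideanSpace ℝ (Fin N)))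
    (p u : EuclideanSpace ℝ (Fin N) → ℝ) : Prop :=
  ContDiffOn ℝ 1 u Ω ∧
    (∫⁻ x in Ω, ENNReal.ofReal ((u x) ^ 2 * p x)) ≠ 0 ∧
    (∫⁻ x in Ω, ENNReal.ofReal ((u x) ^ 2 * p x)) ≠ ∞ ∧
    (∫ x in Ω, u x * p x) = 0

/-- `μ₁(Ω, p)`, the first nontrivial weighted Neumann eigenvalue of `Ω`.
For `p ≡ 1` this is the first nontrivial Neumann Laplacian eigenvalue. -/
def wEV {N : ℕ} (Ω : Set (EuclideanSpace ℝ (Fin N)))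
    (p : EuclideanSpace ℝ (Fin N) → ℝ) : ℝ≥0∞ :=
  ⨅ (u : EuclideanSpace ℝ (Fin N) → ℝ) (_ : wAdm Ω p u), wRayleigh Ω p u

/-- The width of `Ω`: the minimal distance between two parallel supporting hyperplanes,
i.e. the infimum over unit directions of the breadth of `Ω` in that direction. -/
def width {N : ℕ} (Ω : Set (EuclideanSpace ℝ (Fin N))) : ℝ :=
  ⨅ v : Metric.sphere (0 : EuclideanSpace ℝ (Fin N)) 1,
    (sSup ((fun x => ⟪x, (v : EuclideanSpace ℝ (Fin N))⟫) '' Ω) -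
      sInf ((fun x => ⟪x, (v : EuclideanSpace ℝ (Fin N))⟫) '' Ω))

/-- `u` is a first Dirichlet eigenfunction of `Ω` (positive, `L²`-normalized):
it lies in (an avatar of) `H¹₀(Ω)` and achieves `λ₁(Ω)` as a Rayleigh quotient. -/
def IsFirstDirichletEF {N : ℕ} (Ω : Set (EuclideanSpace ℝ (Fin N)))
    (u : EuclideanSpace ℝ (Fin N) → ℝ) : Prop :=
  Continuous u ∧ (∀ x ∉ Ω, u x = 0) ∧ ContDiffOn ℝ 1 u Ω ∧
    (∫⁻ x in Ω, ENNReal.ofReal (‖fderiv ℝ u x‖ ^ 2)) ≠ ∞ ∧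
    (∀ x ∈ Ω, 0 < u x) ∧
    (∫⁻ x in Ω, ENNReal.ofReal ((u x) ^ 2)) = 1 ∧
    dRayleigh Ω u = dirEV Ω 1

/-- `u2` is a second Dirichlet eigenfunction of `Ω` (`L²`-normalized, orthogonal to the
first eigenfunction `u1`), achieving `λ₂(Ω)` as a Rayleigh quotient. -/
def IsSecondDirichletEF {N : ℕ} (Ω : Set (EuclideanSpace ℝ (Fin N)))
    (u1 u2 : EuclideanSpace ℝ (Fin N) → ℝ) : Prop :=
  Continuous u2 ∧ (∀ x ∉ Ω, u2 x = 0) ∧ ContDiffOn ℝ 1 u2 Ω ∧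
    (∫⁻ x in Ω, ENNReal.ofReal (‖fderiv ℝ u2 x‖ ^ 2)) ≠ ∞ ∧
    (∫ x in Ω, u1 x * u2 x) = 0 ∧
    (∫⁻ x in Ω, ENNReal.ofReal ((u2 x) ^ 2)) = 1 ∧
    dRayleigh Ω u2 = dirEV Ω 2

/-- A `p`-weighted `L²` equipartition of `u` in `ω`. -/
def IsL2Equipartition {N : ℕ} (ω : Set (EuclideanSpace ℝ (Fin N)))
    (p u : EuclideanSpace ℝ (Fin N) → ℝ) (n : ℕ)
    (c : Fin n → Set (EuclideanSpace ℝ (Fin N))) : Prop :=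
  (∀ i, Convex ℝ (c i) ∧ IsOpen (c i) ∧ c i ⊆ ω) ∧
    (Pairwise fun i j => Disjoint (c i) (c j)) ∧
    volume (ω \ ⋃ i, c i) = 0 ∧
    ∀ i, (∫ x in c i, u x * p x) = 0 ∧
      (∫⁻ x in c i, ENNReal.ofReal ((u x) ^ 2 * p x)) =
        (∫⁻ x in ω, ENNReal.ofReal ((u x) ^ 2 * p x)) / n

/-! On a vertical line, `u₂²` is everywhere at most the integral of `2 |u₂| |∇u₂|` over the section
of `Ω`. Hence, by Fubini and Cauchy–Schwarz, a cell all of whose vertical sections have length at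
most `H` carries mass `∫ u₂² ≤ 2 H ‖u₂‖ ‖∇u₂‖ = 2 H √λ₂`, while the equipartition forces this mass
to be `1 / n`. Finally `√λ₂ ≤ C / w`: the closure of `Ω` contains the triangle spanned by the
diameter and a point at distance more than `w / 3` from it; this triangle holds two disjoint discs
of radius `w / 16`, and bumps supported in them span a two-dimensional test space. -/

open scoped Function

section Calculus

lemma exists_notMem_Ioc_subset {α : Type*} [ConditionallyCompleteLinearOrder α]
    [TopologicalSpace α] [OrderTopology α] [NoMinOrder α] {O : Set α} (hO : IsOpen O)
    (hb : BddBelow O) (y : α) : ∃ a ≤ y, a ∉ O ∧ Ioc a y ⊆ O := by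
  obtain ⟨m, hm⟩ := hb
  obtain ⟨m', hm'⟩ := exists_lt m
  have hne : (Iic y ∩ Oᶜ).Nonempty :=
    ⟨min y m', min_le_left _ _, fun h => (hm h).not_gt (min_lt_of_right_lt hm')⟩
  have hbdd : BddAbove (Iic y ∩ Oᶜ) := bddAbove_Iic.mono inter_subset_left
  have hmem := (isClosed_Iic.inter hO.isClosed_compl).csSup_mem hne hbdd
  refine ⟨sSup (Iic y ∩ Oᶜ), hmem.1, hmem.2, fun z hz => ?_⟩
  by_contra hzO
  exact hz.1.not_ge (le_csSup hbdd ⟨hz.2, hzO⟩)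

lemma enorm_le_lintegral_enorm_deriv {F : Type*} [NormedAddCommGroup F] [NormedSpace ℝ F]
    [CompleteSpace F] {O : Set ℝ} {h : ℝ → F} (hO : IsOpen O) (hb : BddBelow O)
    (hc : Continuous h) (hd : DifferentiableOn ℝ h O) (h0 : ∀ y ∉ O, h y = 0) (y : ℝ) :
    ‖h y‖ₑ ≤ ∫⁻ z in O, ‖deriv h z‖ₑ := by
  obtain ⟨a, hay, haO, hsub⟩ := exists_notMem_Ioc_subset hO hb y
  have hmono : ∫⁻ z in Ioc a y, ‖deriv h z‖ₑ ≤ ∫⁻ z in O, ‖deriv h z‖ₑ := lintegral_mono_set hsub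
  by_cases htop : ∫⁻ z in Ioc a y, ‖deriv h z‖ₑ = ∞
  · exact le_top.trans_eq (top_le_iff.mp (htop ▸ hmono)).symm
  have hint : IntervalIntegrable (deriv h) volume a y :=
    (intervalIntegrable_iff_integrableOn_Ioc_of_le hay).mpr
      ⟨aestronglyMeasurable_deriv h _, lt_top_iff_ne_top.mpr htop⟩
  have hftc : ∫ z in Ioc a y, deriv h z = h y := by
    rw [← intervalIntegral.integral_of_le hay,
      intervalIntegral.integral_eq_sub_of_hasDerivAt_of_le hay hc.continuousOn
        (fun z hz => (hd.differentiableAt (hO.mem_nhds (hsub ⟨hz.1, hz.2.le⟩))).hasDerivAt) hint,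
      h0 a haO, sub_zero]
  exact hftc ▸ (enorm_integral_le_lintegral_enorm _).trans hmono

lemma enorm_sq_le_lintegral_comp {E : Type*} [NormedAddCommGroup E] [NormedSpace ℝ E]
    {Ω : Set E} {u : E → ℝ} {γ : ℝ → E} (hΩ : IsOpen Ω) (huc : Continuous u)
    (hu0 : ∀ x ∉ Ω, u x = 0) (hud : DifferentiableOn ℝ u Ω) (hγd : Differentiable ℝ γ)
    (hγ : LipschitzWith 1 γ) (hb : BddBelow (γ ⁻¹' Ω)) (y : ℝ) :
    ‖u (γ y)‖ₑ ^ 2 ≤ ∫⁻ z in γ ⁻¹' Ω, 2 * (‖u (γ z)‖ₑ * ‖fderiv ℝ u (γ z)‖ₑ) := by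
  have hO : IsOpen (γ ⁻¹' Ω) := hΩ.preimage hγ.continuous
  have hderiv : ∀ z ∈ γ ⁻¹' Ω, HasDerivAt (fun s => u (γ s) ^ 2)
      (2 * (u (γ z) * fderiv ℝ u (γ z) (deriv γ z))) z := fun z hz => by
    have hcomp := (hud.differentiableAt (hΩ.mem_nhds hz)).hasFDerivAt.comp_hasDerivAt z
      (hγd z).hasDerivAt
    simpa [mul_assoc] using hcomp.fun_pow 2
  calc ‖u (γ y)‖ₑ ^ 2 = ‖u (γ y) ^ 2‖ₑ := (enorm_pow _ _).symm
    _ ≤ ∫⁻ z in γ ⁻¹' Ω, ‖deriv (fun s => u (γ s) ^ 2) z‖ₑ :=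
      enorm_le_lintegral_enorm_deriv (h := fun s => u (γ s) ^ 2) hO hb
        ((huc.comp hγ.continuous).pow 2)
        (fun z hz => (hderiv z hz).differentiableAt.differentiableWithinAt)
        (fun z hz => by simp [hu0 _ hz]) y
    _ ≤ ∫⁻ z in γ ⁻¹' Ω, 2 * (‖u (γ z)‖ₑ * ‖fderiv ℝ u (γ z)‖ₑ) := by
      refine setLIntegral_mono' hO.measurableSet fun z hz => ?_
      have hspeed : ‖deriv γ z‖ₑ ≤ 1 := by
        simpa using ENNReal.ofReal_le_ofReal (norm_deriv_le_of_lipschitz (x₀ := z) hγ)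
      have htwo : ‖(2 : ℝ)‖ₑ = 2 := by simp [Real.enorm_eq_ofReal]
      rw [(hderiv z hz).deriv, enorm_mul, enorm_mul, htwo]
      gcongr
      calc ‖fderiv ℝ u (γ z) (deriv γ z)‖ₑ ≤ ‖fderiv ℝ u (γ z)‖ₑ * ‖deriv γ z‖ₑ :=
            ContinuousLinearMap.le_opENorm _ _
        _ ≤ ‖fderiv ℝ u (γ z)‖ₑ := mul_le_of_le_one_right' hspeed

lemma lintegral_mul_le_of_lintegral_sq_le {α : Type*} [MeasurableSpace α] {μ : Measure α}
    {f g : α → ℝ≥0∞} (hf : AEMeasurable f μ) (hg : AEMeasurable g μ) {a : ℝ≥0∞}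
    (h : ∫⁻ x, g x ^ 2 ∂μ ≤ a ^ 2 * ∫⁻ x, f x ^ 2 ∂μ) :
    ∫⁻ x, f x * g x ∂μ ≤ a * ∫⁻ x, f x ^ 2 ∂μ := by
  have hsqrt : ∀ b : ℝ≥0∞, (b ^ 2) ^ (1 / 2 : ℝ) = b := fun b => by
    rw [← ENNReal.rpow_natCast_mul]; norm_num
  have hholder := ENNReal.lintegral_mul_le_Lp_mul_Lq μ Real.HolderConjugate.two_two hf hg
  simp only [ENNReal.rpow_two, Pi.mul_apply] at hholder
  calc ∫⁻ x, f x * g x ∂μ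
      ≤ (∫⁻ x, f x ^ 2 ∂μ) ^ (1 / 2 : ℝ) * (∫⁻ x, g x ^ 2 ∂μ) ^ (1 / 2 : ℝ) := hholder
    _ ≤ (∫⁻ x, f x ^ 2 ∂μ) ^ (1 / 2 : ℝ) * (a ^ 2 * ∫⁻ x, f x ^ 2 ∂μ) ^ (1 / 2 : ℝ) := by gcongr
    _ = a * (((∫⁻ x, f x ^ 2 ∂μ) ^ (1 / 2 : ℝ)) ^ 2) := by
      rw [ENNReal.mul_rpow_of_nonneg _ _ (by norm_num), hsqrt]; ring
    _ = a * ∫⁻ x, f x ^ 2 ∂μ := by rw [← ENNReal.rpow_mul_natCast]; norm_num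

end Calculus

local notation "ℝ²" => EuclideanSpace ℝ (Fin 2)

section VerticalSections

/-- The arclength parametrization of the vertical line `{t} × ℝ`. Through it a vertical section
`A ∩ ({t} × ℝ)` becomes the set `vline t ⁻¹' A` of reals. -/
def vline (t y : ℝ) : ℝ² := !₂[t, y]

lemma range_vline (t : ℝ) : range (vline t) = {x | x 0 = t} := by
  ext x
  refine ⟨?_, fun hx => ⟨x 1, ?_⟩⟩
  · rintro ⟨y, rfl⟩
    rfl
  · ext i
    fin_cases i
    exacts [hx.symm, rfl]

lemma isometry_vline (t : ℝ) : Isometry (vline t) :=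
  Isometry.of_dist_eq fun y z => by
    simp [vline, EuclideanSpace.dist_eq, Real.sqrt_sq_eq_abs, Real.dist_eq]

lemma differentiable_vline (t : ℝ) : Differentiable ℝ (vline t) := by
  refine differentiable_euclidean.mpr fun i => ?_
  fin_cases i
  exacts [differentiable_const t, differentiable_id]

lemma volume_vline_preimage (t : ℝ) (A : Set ℝ²) :
    volume (vline t ⁻¹' A) = μH[(1 : ℝ)] (A ∩ {x | x 0 = t}) := by
  rw [← hausdorffMeasure_real, (isometry_vline t).hausdorffMeasure_preimage (.inl zero_le_one),
    range_vline]

lemma measurePreserving_vline : MeasurePreserving (fun p : ℝ × ℝ => vline p.1 p.2) :=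
  (PiLp.volume_preserving_toLp (Fin 2)).comp (volume_preserving_finTwoArrow ℝ).symm

lemma setLIntegral_vline_preimage {A : Set ℝ²} (hA : MeasurableSet A) (f : ℝ² → ℝ≥0∞) (t : ℝ) :
    ∫⁻ y in vline t ⁻¹' A, f (vline t y) = ∫⁻ y, A.indicator f (vline t y) := by
  rw [← lintegral_indicator ((isometry_vline t).continuous.measurable hA)]
  rfl

lemma setLIntegral_eq_lintegral_vline {A : Set ℝ²} (hA : MeasurableSet A) {f : ℝ² → ℝ≥0∞}
    (hf : Measurable f) : ∫⁻ x in A, f x = ∫⁻ t, ∫⁻ y in vline t ⁻¹' A, f (vline t y) := by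
  have hm : Measurable (A.indicator f) := hf.indicator hA
  simp_rw [setLIntegral_vline_preimage hA]
  rw [← lintegral_indicator hA, ← measurePreserving_vline.lintegral_comp hm,
    Measure.volume_eq_prod]
  exact lintegral_prod _ (hm.comp measurePreserving_vline.measurable).aemeasurable

lemma setLIntegral_le_mul_of_vline {A Ω : Set ℝ²} (hA : MeasurableSet A) (hΩ : MeasurableSet Ω)
    {f g : ℝ² → ℝ≥0∞} (hf : Measurable f) (hg : Measurable g) {H : ℝ≥0∞}
    (hH : ∀ t, volume (vline t ⁻¹' A) ≤ H)
    (hfg : ∀ t y, f (vline t y) ≤ ∫⁻ z in vline t ⁻¹' Ω, g (vline t z)) :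
    ∫⁻ x in A, f x ≤ H * ∫⁻ x in Ω, g x := by
  have hmeas : Measurable fun t => ∫⁻ z in vline t ⁻¹' Ω, g (vline t z) := by
    simp_rw [setLIntegral_vline_preimage hΩ]
    exact ((hg.indicator hΩ).comp measurePreserving_vline.measurable).lintegral_prod_right'
  rw [setLIntegral_eq_lintegral_vline hA hf, setLIntegral_eq_lintegral_vline hΩ hg,
    ← lintegral_const_mul H hmeas]
  refine lintegral_mono fun t => ?_
  calc ∫⁻ y in vline t ⁻¹' A, f (vline t y)
      ≤ ∫⁻ _ in vline t ⁻¹' A, ∫⁻ z in vline t ⁻¹' Ω, g (vline t z) := lintegral_mono (hfg t)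
    _ = volume (vline t ⁻¹' A) * ∫⁻ z in vline t ⁻¹' Ω, g (vline t z) := by
      rw [setLIntegral_const, mul_comm]
    _ ≤ H * ∫⁻ z in vline t ⁻¹' Ω, g (vline t z) := by gcongr; exact hH t

lemma setLIntegral_enorm_sq_le_mul {A Ω : Set ℝ²} (hA : MeasurableSet A) (hΩ : IsOpen Ω)
    (hb : IsBounded Ω) {u : ℝ² → ℝ} (huc : Continuous u) (hu0 : ∀ x ∉ Ω, u x = 0)
    (hud : DifferentiableOn ℝ u Ω) {H : ℝ≥0∞} (hH : ∀ t, volume (vline t ⁻¹' A) ≤ H) :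
    ∫⁻ x in A, ‖u x‖ₑ ^ 2 ≤ H * ∫⁻ x in Ω, 2 * (‖u x‖ₑ * ‖fderiv ℝ u x‖ₑ) := by
  have hu := huc.measurable.enorm
  have hdu := (measurable_fderiv ℝ u).enorm
  exact setLIntegral_le_mul_of_vline hA hΩ.measurableSet (hu.pow_const 2)
    ((hu.mul hdu).const_mul 2) hH fun t =>
      enorm_sq_le_lintegral_comp hΩ huc hu0 hud (differentiable_vline t)
        (isometry_vline t).lipschitz
        ((isometry_vline t).antilipschitz.isBounded_preimage hb).bddBelow

end VerticalSections

lemma ofReal_sq_eq_enorm_sq (a : ℝ) : ENNReal.ofReal (a ^ 2) = ‖a‖ₑ ^ 2 := by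
  rw [← enorm_pow, Real.enorm_of_nonneg (sq_nonneg a)]

lemma enorm_sum_sq {ι F : Type*} [Fintype ι] [NormedAddCommGroup F] {f : ι → F}
    (hf : Pairwise fun i j => f i = 0 ∨ f j = 0) : ‖∑ i, f i‖ₑ ^ 2 = ∑ i, ‖f i‖ₑ ^ 2 := by
  by_cases hall : ∀ i, f i = 0
  · simp [hall]
  obtain ⟨i, hi⟩ := not_forall.mp hall
  have hzero : ∀ j, j ≠ i → f j = 0 := fun j hj => (hf hj).resolve_right hi
  rw [Fintype.sum_eq_single i hzero, Fintype.sum_eq_single i fun j hj => by simp [hzero j hj]]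

section DisjointSupports

variable {ι : Type*}

lemma linearIndependent_of_disjoint_support {X 𝕜 : Type*} [Ring 𝕜] [NoZeroDivisors 𝕜]
    {φ : ι → X → 𝕜} (hdisj : Pairwise (Disjoint on fun i => Function.support (φ i)))
    (hne : ∀ i, φ i ≠ 0) : LinearIndependent 𝕜 φ := by
  refine linearIndependent_iff'.mpr fun s a ha i hi => ?_
  obtain ⟨x, hx⟩ := Function.ne_iff.mp (hne i)
  have hother : ∀ j ∈ s, j ≠ i → a j • φ j x = 0 := fun j _ hj => by
    rw [Function.notMem_support.mp ((hdisj hj).notMem_of_mem_right hx), smul_zero]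
  have hsum := congrFun ha x
  simp only [Finset.sum_apply, Pi.smul_apply, Pi.zero_apply,
    Finset.sum_eq_single_of_mem i hi hother] at hsum
  exact (smul_eq_zero.mp hsum).resolve_right hx

variable [Fintype ι]

lemma enorm_sum_smul_sq {X F : Type*} [NormedAddCommGroup F] [NormedSpace ℝ F] {φ : ι → X → F}
    (hdisj : Pairwise (Disjoint on fun i => Function.support (φ i))) (a : ι → ℝ) (x : X) :
    ‖(∑ i, a i • φ i) x‖ₑ ^ 2 = ∑ i, ‖a i‖ₑ ^ 2 * ‖φ i x‖ₑ ^ 2 := by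
  rw [Finset.sum_apply, enorm_sum_sq fun i j hij => ?_]
  · simp only [Pi.smul_apply, enorm_smul, mul_pow]
  · by_cases hx : x ∈ Function.support (φ i)
    · right; simp [Function.notMem_support.mp ((hdisj hij).notMem_of_mem_left hx)]
    · left; simp [Function.notMem_support.mp hx]

lemma enorm_fderiv_sum_smul_sq {E F : Type*} [NormedAddCommGroup E] [NormedSpace ℝ E]
    [NormedAddCommGroup F] [NormedSpace ℝ F] {φ : ι → E → F} (hφ : ∀ i, Differentiable ℝ (φ i))
    (hdisj : Pairwise (Disjoint on fun i => tsupport (φ i))) (a : ι → ℝ) (x : E) :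
    ‖fderiv ℝ (∑ i, a i • φ i) x‖ₑ ^ 2 = ∑ i, ‖a i‖ₑ ^ 2 * ‖fderiv ℝ (φ i) x‖ₑ ^ 2 := by
  have hderiv : fderiv ℝ (∑ i, a i • φ i) x = (∑ i, a i • fderiv ℝ (φ i)) x := by
    rw [fderiv_sum fun i _ => (hφ i x).const_smul (a i), Finset.sum_apply]
    simp only [fderiv_const_smul (hφ _ x), Pi.smul_apply]
  rw [hderiv]
  exact enorm_sum_smul_sq
    (fun i j hij => (hdisj hij).mono (support_fderiv_subset ℝ) (support_fderiv_subset ℝ)) a x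

end DisjointSupports

section DirichletEigenvalues

variable {N : ℕ} {Ω : Set (EuclideanSpace ℝ (Fin N))}

lemma dRayleigh_eq_enorm (Ω : Set (EuclideanSpace ℝ (Fin N))) (u : EuclideanSpace ℝ (Fin N) → ℝ) :
    dRayleigh Ω u = (∫⁻ x in Ω, ‖fderiv ℝ u x‖ₑ ^ 2) / ∫⁻ x in Ω, ‖u x‖ₑ ^ 2 := by
  simp only [dRayleigh, ofReal_sq_eq_enorm_sq, enorm_norm]

lemma dirEV_card_le_of_disjoint_tsupport {ι : Type*} [Fintype ι]
    {φ : ι → EuclideanSpace ℝ (Fin N) → ℝ} (hφ : ∀ i, ContDiff ℝ 1 (φ i))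
    (hsupp : ∀ i, tsupport (φ i) ⊆ Ω)
    (hdisj : Pairwise (Disjoint on fun i => tsupport (φ i))) (hne : ∀ i, φ i ≠ 0)
    {L : ℝ≥0∞}
    (hL : ∀ i, ∫⁻ x in Ω, ‖fderiv ℝ (φ i) x‖ₑ ^ 2 ≤ L * ∫⁻ x in Ω, ‖φ i x‖ₑ ^ 2) :
    dirEV Ω (Fintype.card ι) ≤ L := by
  have hdisj' : Pairwise (Disjoint on fun i => Function.support (φ i)) := fun i j hij =>
    (hdisj hij).mono (subset_tsupport _) (subset_tsupport _)
  refine iInf₂_le_of_le (Submodule.span ℝ (range φ))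
    ⟨finrank_span_eq_card (linearIndependent_of_disjoint_support hdisj' hne), fun u hu => ?_⟩
    (iSup₂_le fun u hu => ?_)
  · induction hu using Submodule.span_induction with
    | mem u hu =>
      obtain ⟨i, rfl⟩ := hu
      exact ⟨hφ i, hsupp i⟩
    | zero => exact ⟨contDiff_const, by simp⟩
    | add u v _ _ hu hv =>
      exact ⟨hu.1.add hv.1, (tsupport_add u v).trans (union_subset hu.2 hv.2)⟩
    | smul a u _ hu =>
      exact ⟨hu.1.const_smul a, (tsupport_smul_subset_right (fun _ => a) u).trans hu.2⟩
  · obtain ⟨a, rfl⟩ := (Submodule.mem_span_range_iff_exists_fun ℝ).mp hu.1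
    have hφm : ∀ i, Measurable fun x => ‖φ i x‖ₑ ^ 2 := fun i =>
      (hφ i).continuous.measurable.enorm.pow_const 2
    have hφm' : ∀ i, Measurable fun x => ‖fderiv ℝ (φ i) x‖ₑ ^ 2 := fun i =>
      (measurable_fderiv ℝ (φ i)).enorm.pow_const 2
    rw [dRayleigh_eq_enorm]
    refine ENNReal.div_le_of_le_mul ?_
    simp only [enorm_sum_smul_sq hdisj',
      enorm_fderiv_sum_smul_sq (fun i => (hφ i).differentiable one_ne_zero) hdisj]
    rw [lintegral_finsetSum _ fun i _ => (hφm' i).const_mul _,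
      lintegral_finsetSum _ fun i _ => (hφm i).const_mul _, Finset.mul_sum]
    refine Finset.sum_le_sum fun i _ => ?_
    rw [lintegral_const_mul _ (hφm' i), lintegral_const_mul _ (hφm i), mul_left_comm]
    gcongr
    exact hL i

lemma lintegral_comp_inv_smul_sub {E : Type*} [NormedAddCommGroup E] [NormedSpace ℝ E]
    [MeasurableSpace E] [BorelSpace E] [FiniteDimensional ℝ E] (μ : Measure E) [μ.IsAddHaarMeasure]
    (g : E → ℝ≥0∞) {r : ℝ} (hr : 0 < r) (c : E) :
    ∫⁻ x, g (r⁻¹ • (x - c)) ∂μ = ENNReal.ofReal (r ^ Module.finrank ℝ E) * ∫⁻ x, g x ∂μ := by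
  have hr' : r⁻¹ ≠ 0 := inv_ne_zero hr.ne'
  calc ∫⁻ x, g (r⁻¹ • (x - c)) ∂μ = ∫⁻ x, g (r⁻¹ • x) ∂μ :=
        lintegral_sub_right_eq_self (fun x => g (r⁻¹ • x)) c
    _ = ∫⁻ x, g x ∂μ.map (r⁻¹ • ·) :=
      (lintegral_map_equiv g (Homeomorph.smulOfNeZero r⁻¹ hr').toMeasurableEquiv).symm
    _ = ENNReal.ofReal (r ^ Module.finrank ℝ E) * ∫⁻ x, g x ∂μ := by
      rw [Measure.map_addHaar_smul μ hr', lintegral_smul_measure, inv_pow, inv_inv,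
        abs_of_pos (by positivity), smul_eq_mul]

lemma fderiv_comp_inv_smul_sub {E F : Type*} [NormedAddCommGroup E] [NormedSpace ℝ E]
    [NormedAddCommGroup F] [NormedSpace ℝ F] (f : E → F) (r : ℝ) (c x : E) :
    fderiv ℝ (fun y => f (r⁻¹ • (y - c))) x = r⁻¹ • fderiv ℝ f (r⁻¹ • (x - c)) := by
  rw [fderiv_comp_sub (f := fun y => f (r⁻¹ • y)) c, fderiv_comp_smul]

lemma exists_le_ofReal_sq_mul {a b : ℝ≥0∞} (ha : a ≠ ∞) (hb : b ≠ 0) :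
    ∃ K : ℝ, 0 < K ∧ a ≤ ENNReal.ofReal K ^ 2 * b := by
  have hK : 0 < (a / b).toReal + 1 := add_pos_of_nonneg_of_pos ENNReal.toReal_nonneg one_pos
  refine ⟨(a / b).toReal + 1, hK, ?_⟩
  rw [← ENNReal.div_le_iff_le_mul (.inl hb)
      (.inr (ENNReal.pow_ne_zero (ENNReal.ofReal_ne_zero_iff.mpr hK) 2)),
    ← ENNReal.ofReal_pow hK.le]
  refine ENNReal.le_ofReal_iff_toReal_le (ENNReal.div_ne_top ha hb) (sq_nonneg _) |>.mpr ?_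
  nlinarith [(a / b).toReal_nonneg]

lemma lintegral_enorm_sq_ne_top {X F : Type*} [TopologicalSpace X] [MeasurableSpace X]
    [OpensMeasurableSpace X] [NormedAddCommGroup F] {μ : Measure X} [IsFiniteMeasureOnCompacts μ]
    {f : X → F} (hf : Continuous f) (hsupp : HasCompactSupport f) :
    ∫⁻ x, ‖f x‖ₑ ^ 2 ∂μ ≠ ∞ := by
  have hint : Integrable (fun x => ‖f x‖ ^ 2) μ :=
    (hf.memLp_of_hasCompactSupport hsupp).integrable_norm_pow two_ne_zero
  simpa [enorm_pow] using hint.hasFiniteIntegral.ne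

lemma lintegral_enorm_sq_ne_zero {X F : Type*} [TopologicalSpace X] [MeasurableSpace X]
    [OpensMeasurableSpace X] [NormedAddCommGroup F] {μ : Measure X}
    [μ.IsOpenPosMeasure] {f : X → F} (hf : Continuous f) (hne : f ≠ 0) :
    ∫⁻ x, ‖f x‖ₑ ^ 2 ∂μ ≠ 0 := by
  rw [Ne, lintegral_eq_zero_iff (hf.enorm.measurable.pow_const 2)]
  refine fun h => hne ((hf.ae_eq_iff_eq μ continuous_zero).mp ?_)
  filter_upwards [h] with x hx
  simpa using hx

lemma exists_contDiff_lintegral_fderiv_sq_le (E : Type*) [NormedAddCommGroup E]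
    [NormedSpace ℝ E] [MeasurableSpace E] [BorelSpace E] [FiniteDimensional ℝ E]
    (μ : Measure E) [μ.IsAddHaarMeasure] :
    ∃ K : ℝ, 0 < K ∧ ∀ (c : E) (r : ℝ), 0 < r → ∃ φ : E → ℝ, ContDiff ℝ 1 φ ∧ φ ≠ 0 ∧
      tsupport φ ⊆ Metric.closedBall c r ∧
      ∫⁻ x, ‖fderiv ℝ φ x‖ₑ ^ 2 ∂μ ≤ ENNReal.ofReal (K / r) ^ 2 * ∫⁻ x, ‖φ x‖ₑ ^ 2 ∂μ := by
  let f : ContDiffBump (0 : E) := ⟨1 / 2, 1, by norm_num, by norm_num⟩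
  have hf : ContDiff ℝ 1 f := f.contDiff
  have hone : f 0 = 1 := f.one_of_mem_closedBall (Metric.mem_closedBall_self f.rIn_pos.le)
  obtain ⟨K, hK, hKf⟩ : ∃ K : ℝ, 0 < K ∧
      ∫⁻ x, ‖fderiv ℝ f x‖ₑ ^ 2 ∂μ ≤ ENNReal.ofReal K ^ 2 * ∫⁻ x, ‖f x‖ₑ ^ 2 ∂μ :=
    exists_le_ofReal_sq_mul
      (lintegral_enorm_sq_ne_top (hf.continuous_fderiv one_ne_zero) (f.hasCompactSupport.fderiv ℝ))
      (lintegral_enorm_sq_ne_zero f.continuous (fun h => by simpa [hone] using congrFun h 0))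
  refine ⟨K, hK, fun c r hr => ⟨fun x => f (r⁻¹ • (x - c)), by fun_prop, fun h => ?_, ?_, ?_⟩⟩
  · simpa [hone] using congrFun h c
  · refine closure_minimal (fun x hx => ?_) Metric.isClosed_closedBall
    have hx' : r⁻¹ • (x - c) ∈ Metric.ball (0 : E) 1 := f.support_eq.subset hx
    rw [mem_ball_zero_iff, norm_smul, norm_inv, Real.norm_of_nonneg hr.le, inv_mul_lt_iff₀ hr,
      mul_one] at hx'
    exact mem_closedBall_iff_norm.mpr hx'.le
  · simp only [fderiv_comp_inv_smul_sub, enorm_smul, mul_pow]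
    rw [lintegral_const_mul _ (by fun_prop),
      lintegral_comp_inv_smul_sub μ (fun x => ‖fderiv ℝ f x‖ₑ ^ 2) hr,
      lintegral_comp_inv_smul_sub μ (fun x => ‖f x‖ₑ ^ 2) hr,
      Real.enorm_of_nonneg (inv_nonneg.mpr hr.le), div_eq_inv_mul,
      ENNReal.ofReal_mul (by positivity), mul_pow, mul_assoc]
    rw [mul_left_comm (ENNReal.ofReal K ^ 2)]
    gcongr

lemma exists_dirEV_le_of_disjoint_closedBall (N : ℕ) :
    ∃ K : ℝ, 0 < K ∧ ∀ (k : ℕ) (Ω : Set (EuclideanSpace ℝ (Fin N)))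
      (c : Fin k → EuclideanSpace ℝ (Fin N)) (r : ℝ), 0 < r →
      (∀ i, Metric.closedBall (c i) r ⊆ Ω) →
      Pairwise (Disjoint on fun i => Metric.closedBall (c i) r) →
      dirEV Ω k ≤ ENNReal.ofReal (K / r) ^ 2 := by
  obtain ⟨K, hK, hbump⟩ := exists_contDiff_lintegral_fderiv_sq_le (EuclideanSpace ℝ (Fin N)) volume
  refine ⟨K, hK, fun k Ω c r hr hΩ hdisj => ?_⟩
  choose φ hφ hne hsupp henergy using fun i => hbump (c i) r hr
  have hmass : ∀ i, ∫⁻ x in Ω, ‖φ i x‖ₑ ^ 2 = ∫⁻ x, ‖φ i x‖ₑ ^ 2 := fun i =>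
    setLIntegral_eq_of_support_subset fun x hx =>
      hΩ i (hsupp i (subset_tsupport _ fun h => hx (by simp [h])))
  have hΩsupp i := (hsupp i).trans (hΩ i)
  simpa using dirEV_card_le_of_disjoint_tsupport hφ hΩsupp
    (fun i j hij => (hdisj hij).mono (hsupp i) (hsupp j)) hne fun i =>
      (setLIntegral_le_lintegral _ _).trans (hmass i ▸ henergy i)

end DirichletEigenvalues

section Width

variable {N : ℕ} {Ω : Set (EuclideanSpace ℝ (Fin N))}

lemma lipschitzWith_inner_left {E : Type*} [NormedAddCommGroup E] [InnerProductSpace ℝ E] {v : E}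
    (hv : ‖v‖ ≤ 1) : LipschitzWith 1 fun x : E => ⟪x, v⟫ :=
  LipschitzWith.of_dist_le_mul fun x y => by
    rw [Real.dist_eq, ← inner_sub_left, dist_eq_norm, NNReal.coe_one, one_mul]
    exact (abs_real_inner_le_norm _ _).trans (mul_le_of_le_one_right (norm_nonneg _) hv)

lemma width_le_diam_image (hb : IsBounded Ω) {v : EuclideanSpace ℝ (Fin N)} (hv : ‖v‖ = 1) :
    width Ω ≤ Metric.diam ((fun x => ⟪x, v⟫) '' Ω) := by
  have hbreadth : ∀ w : Metric.sphere (0 : EuclideanSpace ℝ (Fin N)) 1,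
      sSup ((fun x => ⟪x, (w : EuclideanSpace ℝ (Fin N))⟫) '' Ω) -
        sInf ((fun x => ⟪x, (w : EuclideanSpace ℝ (Fin N))⟫) '' Ω) =
      Metric.diam ((fun x => ⟪x, (w : EuclideanSpace ℝ (Fin N))⟫) '' Ω) := fun w =>
    (Real.diam_eq ((lipschitzWith_inner_left (by simp)).isBounded_image hb)).symm
  simp only [width, hbreadth]
  exact ciInf_le ⟨0, by rintro _ ⟨w, rfl⟩; exact Metric.diam_nonneg⟩
    (⟨v, mem_sphere_zero_iff_norm.mpr hv⟩ : Metric.sphere (0 : EuclideanSpace ℝ (Fin N)) 1)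

lemma width_le_diam [NeZero N] (hb : IsBounded Ω) : width Ω ≤ Metric.diam Ω := by
  have hv : ‖EuclideanSpace.single (0 : Fin N) (1 : ℝ)‖ = 1 := by simp
  simpa using (width_le_diam_image hb hv).trans
    ((lipschitzWith_inner_left hv.le).diam_image_le Ω hb)

lemma exists_lt_abs_inner_of_lt_width (hb : IsBounded Ω) {v : EuclideanSpace ℝ (Fin N)}
    (hv : ‖v‖ = 1) {h : ℝ} (h0 : 0 ≤ h) (hw : 2 * h < width Ω) : ∃ x ∈ Ω, h < |⟪x, v⟫| := by
  by_contra! hflat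
  have hsub : (fun x => ⟪x, v⟫) '' Ω ⊆ Metric.closedBall 0 h := by
    rintro _ ⟨x, hx, rfl⟩
    simpa using hflat x hx
  exact hw.not_ge
    ((width_le_diam_image hb hv).trans (Metric.diam_le_of_subset_closedBall h0 hsub))

end Width

section DiameterFrame

lemma horizontal_mem_of_abs_le {K : Set ℝ²} (hK : Convex ℝ K) {d : ℝ} (hd : 0 < d)
    (hl : !₂[-d, 0] ∈ K) (hr : !₂[d, 0] ∈ K) {b : ℝ} (hb : |b| ≤ d) : !₂[b, 0] ∈ K := by
  obtain ⟨hb1, hb2⟩ := abs_le.mp hb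
  have hmem : ((d - b) / (2 * d)) • !₂[-d, 0] + ((d + b) / (2 * d)) • !₂[d, 0] ∈ K :=
    hK hl hr (div_nonneg (by linarith) (by linarith)) (div_nonneg (by linarith) (by linarith))
      (by field_simp; ring)
  convert hmem using 1
  ext i
  fin_cases i
  · simp only [Fin.zero_eta, Matrix.cons_val_zero, PiLp.add_apply, PiLp.smul_apply, smul_eq_mul,
      mul_neg]
    field_simp
    ring
  · simp

/- At height `s * p 1` the triangle with base `[-d, d] × {0}` and apex `p` has the horizontal
section `s * p 0 + (1 - s) * [-d, d]`, which for `s ≤ 1 / 2` contains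
`p 0 / 2 + [-d / 2, d / 2]`. -/
lemma mem_of_mem_half_triangle {K : Set ℝ²} (hK : Convex ℝ K) {d : ℝ} (hd : 0 < d)
    (hl : !₂[-d, 0] ∈ K) (hr : !₂[d, 0] ∈ K) {p : ℝ²} (hp : p ∈ K) (hp0 : |p 0| ≤ d)
    (hp1 : p 1 ≠ 0) {x : ℝ²} (hx0 : |x 0 - p 0 / 2| ≤ d / 2) (hx1 : |x 1 - p 1 / 4| ≤ |p 1| / 4) :
    x ∈ K := by
  set s := x 1 / p 1 with hs
  have hsp : x 1 = s * p 1 := (div_mul_cancel₀ _ hp1).symm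
  have hsabs : |s - 1 / 4| ≤ 1 / 4 := by
    have hscale : x 1 - p 1 / 4 = (s - 1 / 4) * p 1 := by rw [hsp]; ring
    rw [hscale, abs_mul] at hx1
    exact le_of_mul_le_mul_right (by linarith) (abs_pos.mpr hp1)
  obtain ⟨hs0, hs1⟩ : 0 ≤ s ∧ s ≤ 1 / 2 := by
    constructor <;> linarith [abs_le.mp hsabs]
  have hspos : 0 < 1 - s := by linarith
  have hbase : |(x 0 - s * p 0) / (1 - s)| ≤ d := by
    rw [abs_div, abs_of_pos hspos, div_le_iff₀ hspos]
    calc |x 0 - s * p 0| = |(x 0 - p 0 / 2) + (1 / 2 - s) * p 0| := by congr 1; ring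
      _ ≤ |x 0 - p 0 / 2| + |(1 / 2 - s) * p 0| := abs_add_le _ _
      _ ≤ d / 2 + (1 / 2 - s) * d := by
        rw [abs_mul, abs_of_nonneg (by linarith : 0 ≤ 1 / 2 - s)]
        gcongr
      _ = d * (1 - s) := by ring
  have hmem := hK hp (horizontal_mem_of_abs_le hK hd hl hr hbase) hs0 hspos.le (by ring)
  convert hmem using 1
  ext i
  fin_cases i
  · simp only [Fin.zero_eta, PiLp.add_apply, PiLp.smul_apply, smul_eq_mul, Matrix.cons_val_zero]
    field_simp
    ring
  · simpa using hsp

variable {Ω : Set ℝ²}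

lemma sq_add_sq_le_diam_sq (hb : IsBounded Ω) (hl : !₂[-(Metric.diam Ω / 2), 0] ∈ closure Ω)
    (hr : !₂[Metric.diam Ω / 2, 0] ∈ closure Ω) {x : ℝ²} (hx : x ∈ Ω) :
    (|x 0| + Metric.diam Ω / 2) ^ 2 + x 1 ^ 2 ≤ Metric.diam Ω ^ 2 := by
  have hdist : ∀ s : ℝ, !₂[s, 0] ∈ closure Ω → (x 0 - s) ^ 2 + x 1 ^ 2 ≤ Metric.diam Ω ^ 2 := by
    intro s hs
    have hle : dist x !₂[s, 0] ≤ Metric.diam Ω := by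
      rw [← Metric.diam_closure]
      exact Metric.dist_le_diam_of_mem hb.closure (subset_closure hx) hs
    rw [EuclideanSpace.dist_eq, Real.sqrt_le_left Metric.diam_nonneg] at hle
    simpa [Real.dist_eq] using hle
  rcases abs_cases (x 0) with ⟨h, -⟩ | ⟨h, -⟩ <;> rw [h]
  · simpa using hdist _ hl
  · exact (by ring : _ = _).trans_le (hdist _ hr)

lemma abs_zero_le_half_diam (hb : IsBounded Ω) (hl : !₂[-(Metric.diam Ω / 2), 0] ∈ closure Ω)
    (hr : !₂[Metric.diam Ω / 2, 0] ∈ closure Ω) {x : ℝ²} (hx : x ∈ Ω) :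
    |x 0| ≤ Metric.diam Ω / 2 := by
  have hsq : (|x 0| + Metric.diam Ω / 2) ^ 2 ≤ Metric.diam Ω ^ 2 := by
    linarith [sq_add_sq_le_diam_sq hb hl hr hx, sq_nonneg (x 1)]
  linarith [(abs_le_of_sq_le_sq' hsq Metric.diam_nonneg).2]

lemma volume_vline_preimage_eq_zero (hb : IsBounded Ω)
    (hl : !₂[-(Metric.diam Ω / 2), 0] ∈ closure Ω) (hr : !₂[Metric.diam Ω / 2, 0] ∈ closure Ω)
    {t : ℝ} (ht : t ∉ Ioo (-(Metric.diam Ω / 2)) (Metric.diam Ω / 2)) :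
    volume (vline t ⁻¹' Ω) = 0 := by
  refine measure_mono_null (fun y hy => ?_) (measure_singleton (0 : ℝ))
  have hdiam : 0 ≤ Metric.diam Ω := Metric.diam_nonneg
  have habs : Metric.diam Ω / 2 ≤ |t| := not_lt.mp fun h => ht (abs_lt.mp h)
  have hsq : (|t| + Metric.diam Ω / 2) ^ 2 + y ^ 2 ≤ Metric.diam Ω ^ 2 :=
    sq_add_sq_le_diam_sq hb hl hr hy
  have hy2 : y ^ 2 ≤ 0 := by nlinarith
  simpa using hy2.antisymm (sq_nonneg y)

lemma volume_vline_preimage_le_iSup {A : Set ℝ²} (hA : A ⊆ Ω) (hb : IsBounded Ω)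
    (hl : !₂[-(Metric.diam Ω / 2), 0] ∈ closure Ω) (hr : !₂[Metric.diam Ω / 2, 0] ∈ closure Ω)
    (t : ℝ) :
    volume (vline t ⁻¹' A) ≤ ⨆ (s : ℝ) (_ : s ∈ Ioo (-(Metric.diam Ω / 2)) (Metric.diam Ω / 2)),
      μH[(1 : ℝ)] (A ∩ {x | x 0 = s}) := by
  by_cases ht : t ∈ Ioo (-(Metric.diam Ω / 2)) (Metric.diam Ω / 2)
  · exact (volume_vline_preimage t A).trans_le
      (le_iSup₂ (f := fun s _ => μH[(1 : ℝ)] (A ∩ {x | x 0 = s})) t ht)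
  · rw [measure_mono_null (preimage_mono hA) (volume_vline_preimage_eq_zero hb hl hr ht)]
    exact zero_le

lemma closedBall_subset_of_half_triangle (hΩ : IsOpen Ω) (hconv : Convex ℝ Ω) {d : ℝ}
    (hl : !₂[-d, 0] ∈ closure Ω) (hr : !₂[d, 0] ∈ closure Ω) {p : ℝ²} (hp : p ∈ Ω)
    (hp0 : |p 0| ≤ d) {q : ℝ²} {r : ℝ} (hr0 : 0 ≤ r) (hq0 : |q 0 - p 0 / 2| + r < d / 2)
    (hq1 : |q 1 - p 1 / 4| + r < |p 1| / 4) : Metric.closedBall q r ⊆ Ω := by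
  have hd : 0 < d := by linarith [abs_nonneg (q 0 - p 0 / 2)]
  have hp1 : p 1 ≠ 0 := abs_pos.mp (by linarith [abs_nonneg (q 1 - p 1 / 4)])
  let U : Set ℝ² := {x | |x 0 - p 0 / 2| < d / 2 ∧ |x 1 - p 1 / 4| < |p 1| / 4}
  have hUopen : IsOpen U := by
    refine IsOpen.and (isOpen_lt ?_ ?_) (isOpen_lt ?_ ?_) <;> fun_prop
  have hUcl : U ⊆ closure Ω := fun x hx =>
    mem_of_mem_half_triangle hconv.closure hd hl hr (subset_closure hp) hp0 hp1 hx.1.le hx.2.le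
  have hballU : Metric.closedBall q r ⊆ U := fun x hx => by
    have hcoord : ∀ i, |x i - q i| ≤ r := fun i =>
      (PiLp.norm_apply_le (x - q) i).trans (mem_closedBall_iff_norm.mp hx)
    exact ⟨by linarith [abs_sub_le (x 0) (q 0) (p 0 / 2), hcoord 0],
      by linarith [abs_sub_le (x 1) (q 1) (p 1 / 4), hcoord 1]⟩
  have hint : interior (closure Ω) = Ω := by
    rw [hconv.interior_closure_eq_interior_of_nonempty_interior
      (hΩ.interior_eq.symm ▸ ⟨p, hp⟩), hΩ.interior_eq]
  exact hballU.trans ((interior_maximal hUcl hUopen).trans hint.subset)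

lemma exists_disjoint_closedBall_subset (hΩ : IsOpen Ω) (hb : IsBounded Ω) (hconv : Convex ℝ Ω)
    (hl : !₂[-(Metric.diam Ω / 2), 0] ∈ closure Ω) (hr : !₂[Metric.diam Ω / 2, 0] ∈ closure Ω)
    (hw : 0 < width Ω) :
    ∃ c : Fin 2 → ℝ², (∀ i, Metric.closedBall (c i) (width Ω / 16) ⊆ Ω) ∧
      Pairwise (Disjoint on fun i => Metric.closedBall (c i) (width Ω / 16)) := by
  have hwD : width Ω ≤ Metric.diam Ω := width_le_diam hb
  obtain ⟨p, hp, hp1⟩ : ∃ p ∈ Ω, width Ω / 3 < |p 1| := by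
    simpa [EuclideanSpace.inner_single_right] using
      exists_lt_abs_inner_of_lt_width hb (v := EuclideanSpace.single 1 1) (by simp)
        (h := width Ω / 3) (by positivity) (by linarith)
  let q : ℝ → ℝ² := fun σ => !₂[p 0 / 2 + σ, p 1 / 4]
  have hball : ∀ σ : ℝ, |σ| = width Ω / 8 →
      Metric.closedBall (q σ) (width Ω / 16) ⊆ Ω := fun σ hσ => by
    refine closedBall_subset_of_half_triangle hΩ hconv hl hr hp
      (abs_zero_le_half_diam hb hl hr hp) (by positivity) ?_ ?_
    · simpa [q, hσ] using (by linarith : width Ω / 8 + width Ω / 16 < Metric.diam Ω / 2 / 2)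
    · simpa [q] using (by linarith : width Ω / 16 < |p 1| / 4)
  have habs : |width Ω / 8| = width Ω / 8 := abs_of_pos (by positivity)
  have hdisj : Disjoint (Metric.closedBall (q (width Ω / 8)) (width Ω / 16))
      (Metric.closedBall (q (-(width Ω / 8))) (width Ω / 16)) := by
    refine Metric.closedBall_disjoint_closedBall ?_
    calc width Ω / 16 + width Ω / 16 < width Ω / 8 + width Ω / 8 := by linarith
      _ ≤ |(p 0 / 2 + width Ω / 8) - (p 0 / 2 + -(width Ω / 8))| :=
        le_abs.mpr (.inl (by ring_nf; rfl))
      _ ≤ dist (q (width Ω / 8)) (q (-(width Ω / 8))) :=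
        PiLp.dist_apply_le (q (width Ω / 8)) (q (-(width Ω / 8))) 0
  refine ⟨![q (width Ω / 8), q (-(width Ω / 8))],
    Fin.forall_fin_two.mpr ⟨hball _ habs, hball _ (by rw [abs_neg, habs])⟩, fun i j hij => ?_⟩
  fin_cases i <;> fin_cases j
  exacts [absurd rfl hij, hdisj, hdisj.symm, absurd rfl hij]

end DiameterFrame

section CellSections

lemma exists_dirEV_two_le_of_diam : ∃ K : ℝ, 0 < K ∧ ∀ Ω : Set ℝ²,
    IsOpen Ω → IsBounded Ω → Convex ℝ Ω → !₂[-(Metric.diam Ω / 2), 0] ∈ closure Ω →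
    !₂[Metric.diam Ω / 2, 0] ∈ closure Ω → 0 < width Ω →
    dirEV Ω 2 ≤ ENNReal.ofReal (K / width Ω) ^ 2 := by
  obtain ⟨K, hK, hdirEV⟩ := exists_dirEV_le_of_disjoint_closedBall 2
  refine ⟨K * 16, by positivity, fun Ω hΩ hb hconv hl hr hw => ?_⟩
  obtain ⟨c, hc, hdisj⟩ := exists_disjoint_closedBall_subset hΩ hb hconv hl hr hw
  simpa only [div_div_eq_mul_div] using hdirEV 2 Ω c (width Ω / 16) (by positivity) hc hdisj

lemma IsL2Equipartition.setLIntegral_sq {N n : ℕ} {Ω : Set (EuclideanSpace ℝ (Fin N))}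
    {u v : EuclideanSpace ℝ (Fin N) → ℝ} {c : Fin n → Set (EuclideanSpace ℝ (Fin N))}
    (hc : IsL2Equipartition Ω (fun x => u x ^ 2) (fun x => v x / u x) n c)
    (hΩ : MeasurableSet Ω) (hu : ∀ x ∈ Ω, u x ≠ 0) (j : Fin n) :
    ∫⁻ x in c j, ENNReal.ofReal (v x ^ 2) = (∫⁻ x in Ω, ENNReal.ofReal (v x ^ 2)) / n := by
  have hweight : ∀ A ⊆ Ω, MeasurableSet A →
      ∫⁻ x in A, ENNReal.ofReal ((v x / u x) ^ 2 * u x ^ 2) =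
        ∫⁻ x in A, ENNReal.ofReal (v x ^ 2) := fun A hA hAm =>
    setLIntegral_congr_fun hAm fun x hx => by
      rw [← mul_pow, div_mul_cancel₀ _ (hu x (hA hx))]
  obtain ⟨-, hopen, hsub⟩ := hc.1 j
  rw [← hweight (c j) hsub hopen.measurableSet, ← hweight Ω Subset.rfl hΩ]
  exact (hc.2.2.2 j).2

theorem cell_section_lower_bound_general : ∃ Λ : ℝ, 0 < Λ ∧ ∀ Ω : Set ℝ²,
    IsOpen Ω → IsBounded Ω → Convex ℝ Ω → !₂[-(Metric.diam Ω / 2), 0] ∈ closure Ω →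
    !₂[Metric.diam Ω / 2, 0] ∈ closure Ω →
    ∀ u : ℝ² → ℝ, Continuous u → (∀ x ∉ Ω, u x = 0) → DifferentiableOn ℝ u Ω →
      ∫⁻ x in Ω, ENNReal.ofReal (‖fderiv ℝ u x‖ ^ 2) ≤
        dirEV Ω 2 * ∫⁻ x in Ω, ENNReal.ofReal (u x ^ 2) →
      ∀ A ⊆ Ω, MeasurableSet A →
        ENNReal.ofReal (Λ * width Ω) * ∫⁻ x in A, ENNReal.ofReal (u x ^ 2) ≤
          (⨆ (t : ℝ) (_ : t ∈ Ioo (-(Metric.diam Ω / 2)) (Metric.diam Ω / 2)),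
            μH[(1 : ℝ)] (A ∩ {x | x 0 = t})) * ∫⁻ x in Ω, ENNReal.ofReal (u x ^ 2) := by
  obtain ⟨K, hK, hdirEV⟩ := exists_dirEV_two_le_of_diam
  refine ⟨(2 * K)⁻¹, by positivity, fun Ω hΩ hb hconv hl hr u huc hu0 hud henergy A hAΩ hA => ?_⟩
  rcases le_or_gt (width Ω) 0 with hw | hw
  · rw [ENNReal.ofReal_of_nonpos (mul_nonpos_of_nonneg_of_nonpos (by positivity) hw), zero_mul]
    exact zero_le
  set H := ⨆ (t : ℝ) (_ : t ∈ Ioo (-(Metric.diam Ω / 2)) (Metric.diam Ω / 2)),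
    μH[(1 : ℝ)] (A ∩ {x | x 0 = t})
  have hH : ∀ t, volume (vline t ⁻¹' A) ≤ H := volume_vline_preimage_le_iSup hAΩ hb hl hr
  simp only [ofReal_sq_eq_enorm_sq, enorm_norm] at henergy ⊢
  have hu := huc.measurable.enorm
  have hdu := (measurable_fderiv ℝ u).enorm
  have hholder := lintegral_mul_le_of_lintegral_sq_le hu.aemeasurable hdu.aemeasurable
    (henergy.trans (mul_le_mul_left (hdirEV Ω hΩ hb hconv hl hr hw) _))
  have hconst : ENNReal.ofReal ((2 * K)⁻¹ * width Ω) * (2 * ENNReal.ofReal (K / width Ω)) = 1 := by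
    rw [← ENNReal.ofReal_ofNat 2, ← ENNReal.ofReal_mul (by positivity),
      ← ENNReal.ofReal_mul (by positivity), ENNReal.ofReal_eq_one]
    field_simp
  calc ENNReal.ofReal ((2 * K)⁻¹ * width Ω) * ∫⁻ x in A, ‖u x‖ₑ ^ 2
      ≤ ENNReal.ofReal ((2 * K)⁻¹ * width Ω) *
          (H * (2 * (ENNReal.ofReal (K / width Ω) * ∫⁻ x in Ω, ‖u x‖ₑ ^ 2))) := by
        gcongr
        refine (setLIntegral_enorm_sq_le_mul hA hΩ hb huc hu0 hud hH).trans ?_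
        rw [lintegral_const_mul' _ _ ENNReal.ofNat_ne_top]
        gcongr
    _ = ENNReal.ofReal ((2 * K)⁻¹ * width Ω) * (2 * ENNReal.ofReal (K / width Ω)) *
          (H * ∫⁻ x in Ω, ‖u x‖ₑ ^ 2) := by ring
    _ = H * ∫⁻ x in Ω, ‖u x‖ₑ ^ 2 := by rw [hconst, one_mul]

end CellSections

/-- Proposition 5.1 / `p:propsection`: there is a dimensional constant
`Λ > 0` such that: if `Ω ⊂ ℝ²` is an open bounded convex set with diameter `D`, width
`w ≤ (√3/2) D`, first two Dirichlet eigenfunctions `u₁, u₂`, placed so that the horizontal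
segment `(-D/2, D/2) × {0}` is a diameter of `Ω`, and `ω` is a cell of a `u₁²`-weighted `L²`
equipartition of `ū = u₂/u₁` in `Ω` made of `n` cells, then the vertical sections of `ω`
satisfy `sup_{x₁} ℋ¹(ω_{x₁}) ≥ Λ w / n`. -/
theorem cell_section_lower_bound :
    ∃ Λ : ℝ, 0 < Λ ∧
      ∀ Ω : Set (EuclideanSpace ℝ (Fin 2)),
        IsOpen Ω → IsBounded Ω → Convex ℝ Ω → Ω.Nonempty →
        width Ω ≤ Real.sqrt 3 / 2 * Metric.diam Ω →
        (WithLp.equiv 2 (Fin 2 → ℝ)).symm ![-(Metric.diam Ω / 2), 0] ∈ closure Ω →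
        (WithLp.equiv 2 (Fin 2 → ℝ)).symm ![Metric.diam Ω / 2, 0] ∈ closure Ω →
        ∀ u1 u2 : EuclideanSpace ℝ (Fin 2) → ℝ,
          IsFirstDirichletEF Ω u1 → IsSecondDirichletEF Ω u1 u2 →
          ∀ (n : ℕ), 0 < n →
            ∀ c : Fin n → Set (EuclideanSpace ℝ (Fin 2)),
              IsL2Equipartition Ω (fun x => (u1 x) ^ 2) (fun x => u2 x / u1 x) n c →
              ∀ j : Fin n,
                ENNReal.ofReal (Λ * width Ω / n) ≤
                  ⨆ (t : ℝ) (_ : t ∈ Ioo (-(Metric.diam Ω / 2)) (Metric.diam Ω / 2)),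
                    μH[(1 : ℝ)] (c j ∩ {x : EuclideanSpace ℝ (Fin 2) | x 0 = t}) := by
  obtain ⟨Λ, hΛ, hsection⟩ := cell_section_lower_bound_general
  refine ⟨Λ, hΛ, fun Ω hΩ hb hconv _ _ hl hr u1 u2 h1 h2 n hn c hc j => ?_⟩
  obtain ⟨-, -, -, -, hpos, -, -⟩ := h1
  obtain ⟨huc, hu0, hud, -, -, hnorm, hRayleigh⟩ := h2
  obtain ⟨-, hopen, hsub⟩ := hc.1 j
  have hbound := hsection Ω hΩ hb hconv hl hr u2 huc hu0 (hud.differentiableOn one_ne_zero)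
    (by rw [← hRayleigh, dRayleigh, hnorm, div_one, mul_one]) (c j) hsub hopen.measurableSet
  rw [hc.setLIntegral_sq hΩ.measurableSet (fun x hx => (hpos x hx).ne') j, hnorm, mul_one,
    mul_one_div] at hbound
  rwa [ENNReal.ofReal_div_of_pos (Nat.cast_pos.mpr hn), ENNReal.ofReal_natCast]
end
end

section
/- There exists a positive constant C depending only on N + m such that, for every open bounded convex domain Ω ⊂ ℝ^N with diameter D and every positive (1/m)-concave weight φ ∈ L¹(Ω), any first eigenfunction ū associated with the weighted Neumann eigenvalue μ₁(Ω, φ) satisfies ‖ū‖_{L^∞(Ω)} ≤ C μ₁(Ω,φ)^{(N+m)/2} · D^{N+m} / (∫_Ω φ)^{1/2} · ‖ū‖_{L²(Ω,φ)}. -/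
open MeasureTheory Real Set Filter Bornology
open scoped ENNReal RealInnerProductSpace

noncomputable section

/-!
By the `1/m`-concavity of `φ`, contracting the normalized measure `φ dx` on `Ω` with ratio `t`
towards a point of `Ω` increases densities by a factor at most `t ^ (-(N + m))`: the weight adds
`m` to the dimension. Comparing a function with its averages over contracted copies of `Ω` then
gives a Nash and a Poincaré inequality of dimension `N + m` with explicit constants. The
Euler–Lagrange equation of an eigenfunction `u`, tested against truncated powers, bounds the energy
of `|u| ^ p` by `p ^ 2 μ₁` times its squared `L²` norm, so the Nash inequality becomes a reverse
Hölder inequality from `L^p` to `L^{2p}`. Moser iteration along `p = 2 ^ k` yields the bound on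
`u ^ 2`; the Poincaré inequality `1 ≤ 2 ^ (N + m) D ^ 2 μ₁` is what allows the constant to be
a pure power of `D ^ 2 μ₁`.
-/

open scoped NNReal
open ProbabilityTheory
open Module (finrank)
open AffineMap (lineMap)

/-! ### Preliminaries on integrals and variances -/

theorem add_sq_le_two_mul_add_sq (a b : ℝ≥0∞) : (a + b) ^ 2 ≤ 2 * (a ^ 2 + b ^ 2) := by
  have h := ENNReal.rpow_add_le_mul_rpow_add_rpow a b one_le_two
  norm_num [mul_add] at h ⊢
  exact h

theorem sq_lintegral_le_measure_univ_mul_lintegral_sq {α : Type*} [MeasurableSpace α]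
    {ν : Measure α} {g : α → ℝ≥0∞} (hg : AEMeasurable g ν) :
    (∫⁻ x, g x ∂ν) ^ 2 ≤ ν univ * ∫⁻ x, g x ^ 2 ∂ν := by
  have h := ENNReal.lintegral_mul_le_Lp_mul_Lq ν Real.HolderConjugate.two_two
    (aemeasurable_const (b := (1 : ℝ≥0∞))) hg
  simp only [Pi.mul_apply, one_mul, ENNReal.rpow_two, one_pow, lintegral_one] at h
  have hsq (a : ℝ≥0∞) : (a ^ (1 / 2 : ℝ)) ^ 2 = a := by
    rw [← ENNReal.rpow_two, ← ENNReal.rpow_mul]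
    norm_num
  grw [h, mul_pow, hsq, hsq]

theorem lintegral_enorm_sq_eq_ofReal_integral {α F : Type*} [MeasurableSpace α]
    [NormedAddCommGroup F] {ν : Measure α} {f : α → F} (hf : MemLp f 2 ν) :
    ∫⁻ x, ‖f x‖ₑ ^ 2 ∂ν = ENNReal.ofReal (∫ x, ‖f x‖ ^ 2 ∂ν) := by
  rw [ofReal_integral_eq_lintegral_ofReal hf.norm.integrable_sq (ae_of_all _ fun x => sq_nonneg _)]
  simp only [ENNReal.ofReal_pow (norm_nonneg _), ofReal_norm]

theorem memLp_comp_of_lipschitzWith {α : Type*} [MeasurableSpace α] {ν : Measure α}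
    [IsFiniteMeasure ν] {p : ℝ≥0∞} {u : α → ℝ} {H : ℝ → ℝ} {L : ℝ≥0} (hL : LipschitzWith L H)
    (hu : MemLp u p ν) : MemLp (H ∘ u) p ν := by
  have hsub : LipschitzWith L fun s => H s - H 0 :=
    LipschitzWith.of_dist_le_mul fun s t => by simpa using hL.dist_le_mul s t
  convert (hsub.comp_memLp (sub_self _) hu).add (memLp_const (H 0)) using 1
  ext x
  simp

theorem aestronglyMeasurable_of_continuousOn {α β : Type*} [TopologicalSpace α]
    [TopologicalSpace.PseudoMetrizableSpace α] [SecondCountableTopology α] [MeasurableSpace α]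
    [OpensMeasurableSpace α] [TopologicalSpace β] [TopologicalSpace.PseudoMetrizableSpace β]
    {ν : Measure α} {s : Set α} {g : α → β} (hs : MeasurableSet s) (hν : ∀ᵐ x ∂ν, x ∈ s)
    (hg : ContinuousOn g s) : AEStronglyMeasurable g ν := by
  rw [← Measure.restrict_eq_self_of_ae_mem hν]
  exact hg.aestronglyMeasurable hs

theorem memLp_two_iff_lintegral_ne_top {α F : Type*} [MeasurableSpace α] [NormedAddCommGroup F]
    {ν : Measure α} {f : α → F} (hf : AEStronglyMeasurable f ν) :
    MemLp f 2 ν ↔ ∫⁻ x, ‖f x‖ₑ ^ 2 ∂ν ≠ ∞ := by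
  rw [MemLp, eLpNorm_lt_top_iff_lintegral_rpow_enorm_lt_top two_ne_zero ENNReal.ofNat_ne_top]
  simp [hf, lt_top_iff_ne_top]

theorem lintegral_enorm_sq_eq_ofReal_variance {α : Type*} [MeasurableSpace α] {ν : Measure α}
    {f : α → ℝ} (hf : MemLp f 2 ν) (hmean : ∫ x, f x ∂ν = 0) :
    ∫⁻ x, ‖f x‖ₑ ^ 2 ∂ν = ENNReal.ofReal Var[f; ν] := by
  simp only [lintegral_enorm_sq_eq_ofReal_integral hf, norm_eq_abs, sq_abs,
    variance_of_integral_eq_zero hf.1.aemeasurable hmean]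

theorem le_of_ae_le_of_continuousOn {X : Type*} [TopologicalSpace X] [MeasurableSpace X]
    [OpensMeasurableSpace X] {μ : Measure X} [μ.IsOpenPosMeasure] {U : Set X} (hU : IsOpen U)
    {f : X → ℝ} {M : ℝ} (hf : ContinuousOn f U) (hle : ∀ᵐ x ∂μ.restrict U, f x ≤ M) :
    ∀ x ∈ U, f x ≤ M := by
  have hmax : EqOn (fun x => max (f x) M) (fun _ => M) U :=
    Measure.eqOn_open_of_ae_eq (hle.mono fun x hx => max_eq_right hx) hU (hf.sup continuousOn_const)
      continuousOn_const
  exact fun x hx => max_eq_right_iff.1 (hmax hx)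

theorem fderiv_eq_zero_of_variance_eq_zero {V : Type*} [NormedAddCommGroup V] [NormedSpace ℝ V]
    [MeasurableSpace V] [OpensMeasurableSpace V] {μ P : Measure V} [μ.IsOpenPosMeasure]
    [IsFiniteMeasure P] {U : Set V} {f : V → ℝ} (hU : IsOpen U) (hμP : μ.restrict U ≪ P)
    (hf : ContinuousOn f U) (hLp : MemLp f 2 P) (hvar : Var[f; P] = 0) {x : V} (hx : x ∈ U) :
    fderiv ℝ f x = 0 := by
  have hconst : EqOn f (fun _ => ∫ y, f y ∂P) U :=
    Measure.eqOn_open_of_ae_eq (hμP.ae_le (ae_eq_integral_of_variance_eq_zero hLp hvar)) hU hf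
      continuousOn_const
  rw [(hconst.eventuallyEq_of_mem (hU.mem_nhds hx)).fderiv_eq, fderiv_fun_const, Pi.zero_apply]

/-! ### Measures contracting along segments -/

section Contraction

variable {E : Type*} [NormedAddCommGroup E] [NormedSpace ℝ E] [MeasurableSpace E]
  {Ω : Set E} {n : ℕ} {ν P : Measure E} {x y : E} {s t : ℝ}

/-- The measure contraction property `MCP(0, n)` of Sturm and Ohta for the segments issuing from
points of `Ω`: contracting `ν` towards a point of `Ω` with ratio `t` yields at most `t⁻ⁿ ν`. -/
def MeasureContraction (Ω : Set E) (n : ℕ) (ν : Measure E) : Prop :=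
  ∀ y ∈ Ω, ∀ t ∈ Ioc (0 : ℝ) 1, ν.map (lineMap y · t) ≤ ENNReal.ofReal (t ^ n)⁻¹ • ν

theorem MeasureContraction.smul (h : MeasureContraction Ω n ν) (c : ℝ≥0∞) :
    MeasureContraction Ω n (c • ν) := by
  intro y hy t ht
  rw [Measure.map_smul, smul_comm]
  gcongr
  exact h y hy t ht

variable [BorelSpace E]

theorem measurableEmbedding_lineMap (y : E) (ht : t ≠ 0) :
    MeasurableEmbedding (lineMap y · t : E → E) := by
  simpa only [Function.comp_def, AffineMap.lineMap_apply, vsub_eq_sub, vadd_eq_add] using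
    (measurableEmbedding_addRight y).comp
      ((measurableEmbedding_const_smul₀ ht).comp (measurableEmbedding_subRight y))

theorem map_lineMap_addHaar [FiniteDimensional ℝ E] (μ : Measure E) [μ.IsAddHaarMeasure] (y : E)
    (ht : 0 < t) : μ.map (lineMap y · t) = ENNReal.ofReal (t ^ finrank ℝ E)⁻¹ • μ := by
  have hcomp : (lineMap y · t : E → E) = (· + y) ∘ (t • ·) ∘ (· - y) := by
    ext x
    simp [AffineMap.lineMap_apply]
  rw [hcomp, ← Measure.map_map (by fun_prop) (by fun_prop),
    ← Measure.map_map (by fun_prop) (by fun_prop), map_sub_right_eq_self,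
    Measure.map_addHaar_smul μ ht.ne', Measure.map_smul, map_add_right_eq_self,
    abs_of_pos (by positivity)]

theorem le_inv_pow_mul_lineMap_of_concaveOn_rpow {V : Type*} [AddCommGroup V] [Module ℝ V]
    {S : Set V} {φ : V → ℝ} {m : ℕ} (hm : m ≠ 0) (hφ : ∀ x ∈ S, 0 ≤ φ x)
    (hconc : ConcaveOn ℝ S fun x => φ x ^ ((1 : ℝ) / m)) {x y : V} (hx : x ∈ S) (hy : y ∈ S)
    (ht : t ∈ Ioc (0 : ℝ) 1) : φ x ≤ (t ^ m)⁻¹ * φ (lineMap y x t) := by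
  have hz : lineMap y x t ∈ S := hconc.1.lineMap_mem hy hx ⟨ht.1.le, ht.2⟩
  have hpow {z : V} (hz : z ∈ S) : (φ z ^ ((1 : ℝ) / m)) ^ m = φ z := by
    rw [one_div, rpow_inv_natCast_pow (hφ z hz) hm]
  have hroot : t * φ x ^ ((1 : ℝ) / m) ≤ φ (lineMap y x t) ^ ((1 : ℝ) / m) := by
    have h := hconc.2 hy hx (sub_nonneg.2 ht.2) ht.1.le (sub_add_cancel 1 t)
    simp only [← AffineMap.lineMap_apply_module y x t, smul_eq_mul] at h
    have : 0 ≤ (1 - t) * φ y ^ ((1 : ℝ) / m) :=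
      mul_nonneg (sub_nonneg.2 ht.2) (rpow_nonneg (hφ y hy) _)
    linarith
  rw [le_inv_mul_iff₀ (pow_pos ht.1 m), ← hpow hx, ← hpow hz, ← mul_pow]
  exact pow_le_pow_left₀ (mul_nonneg ht.1.le (rpow_nonneg (hφ x hx) _)) hroot m

theorem MeasureContraction.withDensity [FiniteDimensional ℝ E] (μ : Measure E)
    [μ.IsAddHaarMeasure] (hΩ : MeasurableSet Ω) (hconv : Convex ℝ Ω) {m : ℕ} {w : E → ℝ≥0∞}
    (hw : ∀ y ∈ Ω, ∀ x ∈ Ω, ∀ t ∈ Ioc (0 : ℝ) 1,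
      w x ≤ ENNReal.ofReal (t ^ m)⁻¹ * w (lineMap y x t)) :
    MeasureContraction Ω (finrank ℝ E + m) ((μ.restrict Ω).withDensity w) := by
  intro y hy t ht
  have hT := measurableEmbedding_lineMap y ht.1.ne'
  refine Measure.le_iff.2 fun s hs => ?_
  rw [Measure.map_apply hT.measurable hs, Measure.smul_apply, smul_eq_mul,
    withDensity_apply _ (hT.measurable hs), withDensity_apply _ hs,
    Measure.restrict_restrict (hT.measurable hs), Measure.restrict_restrict hs]
  calc ∫⁻ x in (lineMap y · t) ⁻¹' s ∩ Ω, w x ∂μ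
      ≤ ∫⁻ x in (lineMap y · t) ⁻¹' s ∩ Ω, ENNReal.ofReal (t ^ m)⁻¹ * w (lineMap y x t) ∂μ :=
        setLIntegral_mono' ((hT.measurable hs).inter hΩ) fun x hx => hw y hy x hx.2 t ht
    _ ≤ ∫⁻ x in (lineMap y · t) ⁻¹' (s ∩ Ω), ENNReal.ofReal (t ^ m)⁻¹ * w (lineMap y x t) ∂μ :=
        lintegral_mono_set fun x hx => ⟨hx.1, hconv.lineMap_mem hy hx.2 ⟨ht.1.le, ht.2⟩⟩
    _ = ENNReal.ofReal (t ^ m)⁻¹ * ∫⁻ z in s ∩ Ω, w z ∂μ.map (lineMap y · t) := by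
        rw [lintegral_const_mul' _ _ ENNReal.ofReal_ne_top, hT.restrict_map, hT.lintegral_map]
    _ = ENNReal.ofReal (t ^ (finrank ℝ E + m))⁻¹ * ∫⁻ z in s ∩ Ω, w z ∂μ := by
        have := ht.1
        rw [map_lineMap_addHaar μ y ht.1, Measure.restrict_smul, lintegral_smul_measure,
          smul_eq_mul, ← mul_assoc, ← ENNReal.ofReal_mul (by positivity), pow_add, mul_inv_rev]

theorem MeasureContraction.lintegral_comp_lineMap_le (h : MeasureContraction Ω n ν) (hy : y ∈ Ω)
    (ht : t ∈ Ioc (0 : ℝ) 1) {g : E → ℝ≥0∞} (hg : AEMeasurable g ν) :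
    ∫⁻ x, g (lineMap y x t) ∂ν ≤ ENNReal.ofReal (t ^ n)⁻¹ * ∫⁻ x, g x ∂ν := by
  have hmap := h y hy t ht
  have hg' : AEMeasurable g (ν.map (lineMap y · t)) :=
    (hg.smul_measure _).mono_measure hmap
  rw [← lintegral_map' hg' (measurableEmbedding_lineMap y ht.1.ne').measurable.aemeasurable,
    ← smul_eq_mul, ← lintegral_smul_measure]
  exact lintegral_mono' hmap le_rfl

theorem ofReal_inv_pow_le_two_pow (n : ℕ) (ht : 1 / 2 ≤ t) : ENNReal.ofReal (t ^ n)⁻¹ ≤ 2 ^ n := by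
  have : t⁻¹ ≤ 2 := inv_le_of_inv_le₀ (by norm_num) (by linarith)
  rw [← inv_pow, ENNReal.ofReal_pow (by positivity)]
  gcongr
  simpa using ENNReal.ofReal_le_ofReal this

variable [SecondCountableTopology E] [IsProbabilityMeasure P]

/-- Contract towards the farther endpoint, so that the ratio is at least `1 / 2`. -/
theorem MeasureContraction.lintegral_lintegral_comp_lineMap_le (h : MeasureContraction Ω n P)
    (hP : ∀ᵐ x ∂P, x ∈ Ω) (ht : t ∈ Icc (0 : ℝ) 1) {g : E → ℝ≥0∞} (hg : Measurable g) :
    ∫⁻ x, ∫⁻ y, g (lineMap x y t) ∂P ∂P ≤ 2 ^ n * ∫⁻ x, g x ∂P := by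
  wlog hhalf : 1 / 2 ≤ t generalizing t
  · rw [lintegral_lintegral_swap]
    · simpa only [AffineMap.lineMap_apply_one_sub] using
        this (t := 1 - t) ⟨by linarith [ht.2], by linarith [ht.1]⟩ (by linarith)
    · exact (hg.comp (by fun_prop)).aemeasurable
  · calc ∫⁻ x, ∫⁻ y, g (lineMap x y t) ∂P ∂P ≤ ∫⁻ _, 2 ^ n * ∫⁻ y, g y ∂P ∂P := by
          refine lintegral_mono_ae ?_
          filter_upwards [hP] with x hx
          grw [h.lintegral_comp_lineMap_le hx ⟨by linarith, ht.2⟩ hg.aemeasurable,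
            ofReal_inv_pow_le_two_pow n hhalf]
      _ = 2 ^ n * ∫⁻ x, g x ∂P := by simp

theorem MeasureContraction.lintegral_lintegral_segment_le (h : MeasureContraction Ω n P)
    (hP : ∀ᵐ x ∂P, x ∈ Ω) (ht : t ∈ Icc (0 : ℝ) 1) {g : E → ℝ≥0∞} (hg : Measurable g) :
    ∫⁻ x, ∫⁻ y, ∫⁻ r in Icc (0 : ℝ) 1, g (lineMap x y (r * t)) ∂volume ∂P ∂P
      ≤ 2 ^ n * ∫⁻ x, g x ∂P := by
  have hxry : Measurable fun p : (E × ℝ) × E => g (lineMap p.1.1 p.2 (p.1.2 * t)) :=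
    hg.comp (by fun_prop)
  have hswap (x : E) : ∫⁻ y, ∫⁻ r in Icc (0 : ℝ) 1, g (lineMap x y (r * t)) ∂volume ∂P =
      ∫⁻ r in Icc (0 : ℝ) 1, ∫⁻ y, g (lineMap x y (r * t)) ∂P := by
    refine lintegral_lintegral_swap (Measurable.aemeasurable ?_)
    exact hg.comp (g := g) (f := fun p : E × ℝ => lineMap x p.1 (p.2 * t)) (by fun_prop)
  calc ∫⁻ x, ∫⁻ y, ∫⁻ r in Icc (0 : ℝ) 1, g (lineMap x y (r * t)) ∂volume ∂P ∂P
      = ∫⁻ r in Icc (0 : ℝ) 1, ∫⁻ x, ∫⁻ y, g (lineMap x y (r * t)) ∂P ∂P := by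
        simp_rw [hswap]
        exact lintegral_lintegral_swap hxry.lintegral_prod_right'.aemeasurable
    _ ≤ ∫⁻ _ in Icc (0 : ℝ) 1, 2 ^ n * ∫⁻ x, g x ∂P :=
        setLIntegral_mono measurable_const fun r hr => h.lintegral_lintegral_comp_lineMap_le hP
          ⟨mul_nonneg hr.1 ht.1, mul_le_one₀ hr.2 ht.1 ht.2⟩ hg
    _ = 2 ^ n * ∫⁻ x, g x ∂P := by simp

end Contraction

/-! ### Functional inequalities from the contraction property -/

section ContractingDomain

variable {E F : Type*} [NormedAddCommGroup E] [NormedSpace ℝ E] [NormedAddCommGroup F]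
  [NormedSpace ℝ F] {Ω : Set E} {n : ℕ} {f : E → F} {x y : E}

theorem enorm_sub_sq_le_edist_sq_mul_lintegral [MeasurableSpace E] [BorelSpace E]
    [CompleteSpace F] (hΩ : IsOpen Ω) (hconv : Convex ℝ Ω) (hf : ContDiffOn ℝ 1 f Ω) (hx : x ∈ Ω)
    (hy : y ∈ Ω) :
    ‖f x - f y‖ₑ ^ 2 ≤
      edist x y ^ 2 * ∫⁻ r in Icc (0 : ℝ) 1, ‖fderiv ℝ f (lineMap x y r)‖ₑ ^ 2 := by
  have hmem (r : ℝ) (hr : r ∈ Icc (0 : ℝ) 1) : lineMap x y r ∈ Ω := hconv.lineMap_mem hx hy hr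
  have hmeas : Measurable fun r : ℝ => ‖fderiv ℝ f (lineMap x y r)‖ₑ :=
    ((measurable_fderiv ℝ f).comp (by fun_prop)).enorm
  have hderiv (r : ℝ) (hr : r ∈ Icc (0 : ℝ) 1) :
      ‖deriv (f ∘ lineMap x y) r‖ₑ ≤ ‖fderiv ℝ f (lineMap x y r)‖ₑ * edist x y := by
    have hfr : DifferentiableAt ℝ f (lineMap x y r) :=
      (hf.differentiableOn one_ne_zero).differentiableAt (hΩ.mem_nhds (hmem r hr))
    rw [(hfr.hasFDerivAt.comp_hasDerivAt r AffineMap.hasDerivAt_lineMap).deriv, edist_comm,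
      edist_eq_enorm_sub]
    exact ContinuousLinearMap.le_opENorm _ _
  have hline : ‖f x - f y‖ₑ ≤
      (∫⁻ r in Icc (0 : ℝ) 1, ‖fderiv ℝ f (lineMap x y r)‖ₑ) * edist x y := by
    have hcomp : ContDiffOn ℝ 1 (f ∘ lineMap x y) (Icc (0 : ℝ) 1) :=
      hf.comp (AffineMap.contDiff_lineMap x y).contDiffOn hmem
    have h := enorm_sub_le_lintegral_deriv_of_contDiffOn_Icc hcomp zero_le_one
    rw [Function.comp_apply, Function.comp_apply, AffineMap.lineMap_apply_one,
      AffineMap.lineMap_apply_zero, enorm_sub_rev] at h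
    rw [← lintegral_mul_const _ hmeas]
    exact h.trans (setLIntegral_mono (hmeas.mul_const _) hderiv)
  grw [hline, mul_pow, mul_comm,
    sq_lintegral_le_measure_univ_mul_lintegral_sq hmeas.aemeasurable.restrict]
  simp

/-- A bounded convex domain with a probability measure contracting along its segments: the setting
in which the Nash and Poincaré inequalities below hold. -/
structure IsContractingDomain [MeasurableSpace E] (Ω : Set E) (n : ℕ) (P : Measure E) : Prop where
  isOpen : IsOpen Ω
  convex : Convex ℝ Ω
  isBounded : IsBounded Ω
  ae_mem : ∀ᵐ x ∂P, x ∈ Ω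
  contraction : MeasureContraction Ω n P

namespace IsContractingDomain

variable [MeasurableSpace E] [BorelSpace E] [SecondCountableTopology E] {P : Measure E} {ε : ℝ}

theorem aestronglyMeasurable {X : Type*} [TopologicalSpace X]
    [TopologicalSpace.PseudoMetrizableSpace X] {g : E → X} (h : IsContractingDomain Ω n P)
    (hg : ContinuousOn g Ω) : AEStronglyMeasurable g P :=
  aestronglyMeasurable_of_continuousOn h.isOpen.measurableSet h.ae_mem hg

theorem aestronglyMeasurable_comp_lineMap {X : Type*} [TopologicalSpace X]
    [TopologicalSpace.PseudoMetrizableSpace X] {g : E → X} (h : IsContractingDomain Ω n P)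
    (hg : ContinuousOn g Ω) (hx : x ∈ Ω) (hε : ε ∈ Icc (0 : ℝ) 1) :
    AEStronglyMeasurable (fun y => g (lineMap x y ε)) P :=
  h.aestronglyMeasurable <| hg.comp (f := fun y => lineMap x y ε) (by fun_prop)
    fun _ hy => h.convex.lineMap_mem hx hy hε

variable [CompleteSpace F] [IsProbabilityMeasure P]

theorem lintegral_lintegral_enorm_sub_sq_le (h : IsContractingDomain Ω n P)
    (hf : ContDiffOn ℝ 1 f Ω) (hε : ε ∈ Icc (0 : ℝ) 1) :
    ∫⁻ x, ∫⁻ y, ‖f x - f (lineMap x y ε)‖ₑ ^ 2 ∂P ∂P ≤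
      ENNReal.ofReal (2 ^ n * (ε * Metric.diam Ω) ^ 2) * ∫⁻ x, ‖fderiv ℝ f x‖ₑ ^ 2 ∂P := by
  have hpoint (x : E) (hx : x ∈ Ω) (y : E) (hy : y ∈ Ω) : ‖f x - f (lineMap x y ε)‖ₑ ^ 2 ≤
      ENNReal.ofReal ((ε * Metric.diam Ω) ^ 2) *
        ∫⁻ r in Icc (0 : ℝ) 1, ‖fderiv ℝ f (lineMap x y (r * ε))‖ₑ ^ 2 := by
    have hz : lineMap x y ε ∈ Ω := h.convex.lineMap_mem hx hy hε
    have hdist : edist x (lineMap x y ε) ^ 2 ≤ ENNReal.ofReal ((ε * Metric.diam Ω) ^ 2) := by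
      rw [edist_dist, dist_left_lineMap, norm_of_nonneg hε.1,
        ← ENNReal.ofReal_pow (mul_nonneg hε.1 dist_nonneg)]
      gcongr
      · exact mul_nonneg hε.1 dist_nonneg
      · exact hε.1
      · exact Metric.dist_le_diam_of_mem h.isBounded hx hy
    grw [enorm_sub_sq_le_edist_sq_mul_lintegral h.isOpen h.convex hf hx hz, hdist]
    simp only [AffineMap.lineMap_lineMap_right, le_refl]
  calc ∫⁻ x, ∫⁻ y, ‖f x - f (lineMap x y ε)‖ₑ ^ 2 ∂P ∂P
      ≤ ∫⁻ x, ∫⁻ y, ENNReal.ofReal ((ε * Metric.diam Ω) ^ 2) *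
          ∫⁻ r in Icc (0 : ℝ) 1, ‖fderiv ℝ f (lineMap x y (r * ε))‖ₑ ^ 2 ∂volume ∂P ∂P := by
        refine lintegral_mono_ae (h.ae_mem.mono fun x hx => ?_)
        exact lintegral_mono_ae (h.ae_mem.mono fun y hy => hpoint x hx y hy)
    _ ≤ ENNReal.ofReal ((ε * Metric.diam Ω) ^ 2) * (2 ^ n * ∫⁻ x, ‖fderiv ℝ f x‖ₑ ^ 2 ∂P) := by
        simp_rw [lintegral_const_mul' _ _ ENNReal.ofReal_ne_top]
        gcongr
        exact h.contraction.lintegral_lintegral_segment_le h.ae_mem hε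
          ((measurable_fderiv ℝ f).enorm.pow_const 2)
    _ = ENNReal.ofReal (2 ^ n * (ε * Metric.diam Ω) ^ 2) * ∫⁻ x, ‖fderiv ℝ f x‖ₑ ^ 2 ∂P := by
        rw [← mul_assoc, mul_comm (2 ^ n : ℝ), ENNReal.ofReal_mul (sq_nonneg _),
          ENNReal.ofReal_pow zero_le_two, ENNReal.ofReal_ofNat]

/-- Compare `f x` with the average of `f` over the copy of `Ω` shrunk towards `x` with ratio `ε`. -/
theorem lintegral_enorm_sq_le_nash (h : IsContractingDomain Ω n P) (hf : ContDiffOn ℝ 1 f Ω)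
    (hε : ε ∈ Ioc (0 : ℝ) 1) :
    ∫⁻ x, ‖f x‖ₑ ^ 2 ∂P ≤
      2 * (ENNReal.ofReal (2 ^ n * (ε * Metric.diam Ω) ^ 2) * ∫⁻ x, ‖fderiv ℝ f x‖ₑ ^ 2 ∂P) +
        2 * (ENNReal.ofReal (ε ^ n)⁻¹ * ∫⁻ x, ‖f x‖ₑ ∂P) ^ 2 := by
  have hε' : ε ∈ Icc (0 : ℝ) 1 := Ioc_subset_Icc_self hε
  have hpoint (x : E) (hx : x ∈ Ω) : ‖f x‖ₑ ^ 2 ≤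
      2 * ∫⁻ y, ‖f x - f (lineMap x y ε)‖ₑ ^ 2 ∂P +
        2 * (ENNReal.ofReal (ε ^ n)⁻¹ * ∫⁻ y, ‖f y‖ₑ ∂P) ^ 2 := by
    have hdiff : AEMeasurable (fun y => ‖f x - f (lineMap x y ε)‖ₑ) P :=
      (aestronglyMeasurable_const.sub
        (h.aestronglyMeasurable_comp_lineMap hf.continuousOn hx hε')).enorm
    calc ‖f x‖ₑ ^ 2 = (∫⁻ _, ‖f x‖ₑ ∂P) ^ 2 := by simp
      _ ≤ (∫⁻ y, ‖f x - f (lineMap x y ε)‖ₑ ∂P + ∫⁻ y, ‖f (lineMap x y ε)‖ₑ ∂P) ^ 2 := by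
        rw [← lintegral_add_left' hdiff]
        gcongr with y
        simpa using enorm_add_le (f x - f (lineMap x y ε)) (f (lineMap x y ε))
      _ ≤ _ := by
        grw [add_sq_le_two_mul_add_sq, mul_add, sq_lintegral_le_measure_univ_mul_lintegral_sq hdiff,
          h.contraction.lintegral_comp_lineMap_le hx hε
            (h.aestronglyMeasurable hf.continuousOn).enorm]
        simp
  grw [← h.lintegral_lintegral_enorm_sub_sq_le hf hε',
    ← lintegral_const_mul' _ _ ENNReal.ofNat_ne_top]
  refine (lintegral_mono_ae (h.ae_mem.mono hpoint)).trans_eq ?_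
  rw [lintegral_add_right _ measurable_const, lintegral_const, measure_univ, mul_one]

theorem lintegral_enorm_sq_le_poincare (h : IsContractingDomain Ω n P) (hf : ContDiffOn ℝ 1 f Ω)
    (hint : Integrable f P) (hmean : ∫ x, f x ∂P = 0) :
    ∫⁻ x, ‖f x‖ₑ ^ 2 ∂P ≤
      ENNReal.ofReal (2 ^ n * Metric.diam Ω ^ 2) * ∫⁻ x, ‖fderiv ℝ f x‖ₑ ^ 2 ∂P := by
  have hpoint (x : E) : ‖f x‖ₑ ^ 2 ≤ ∫⁻ y, ‖f x - f (lineMap x y (1 : ℝ))‖ₑ ^ 2 ∂P := by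
    have hmeas : AEMeasurable (fun y => ‖f x - f y‖ₑ) P :=
      (aestronglyMeasurable_const.sub hint.1).enorm
    calc ‖f x‖ₑ ^ 2 = ‖∫ y, (f x - f y) ∂P‖ₑ ^ 2 := by
          rw [integral_sub (integrable_const _) hint, hmean]
          simp
      _ ≤ (∫⁻ y, ‖f x - f y‖ₑ ∂P) ^ 2 := by gcongr; exact enorm_integral_le_lintegral_enorm _
      _ ≤ _ := by
          grw [sq_lintegral_le_measure_univ_mul_lintegral_sq hmeas]
          simp
  grw [lintegral_mono hpoint, h.lintegral_lintegral_enorm_sub_sq_le hf ⟨zero_le_one, le_rfl⟩,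
    one_mul]

theorem lintegral_enorm_sq_le_reverseHolder (h : IsContractingDomain Ω n P)
    (hf : ContDiffOn ℝ 1 f Ω) (hfin : ∫⁻ x, ‖f x‖ₑ ^ 2 ∂P ≠ ∞) {Z : ℝ} (hZ : 1 ≤ Z)
    (henergy : ENNReal.ofReal (4 * 2 ^ n * Metric.diam Ω ^ 2) * ∫⁻ x, ‖fderiv ℝ f x‖ₑ ^ 2 ∂P ≤
      ENNReal.ofReal Z * ∫⁻ x, ‖f x‖ₑ ^ 2 ∂P) :
    ∫⁻ x, ‖f x‖ₑ ^ 2 ∂P ≤ 4 * ENNReal.ofReal (Z ^ n) * (∫⁻ x, ‖f x‖ₑ ∂P) ^ 2 := by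
  set a := ∫⁻ x, ‖f x‖ₑ ^ 2 ∂P
  have hZ0 : 0 < Z := by linarith
  obtain ⟨ε, hε, hεsq⟩ : ∃ ε ∈ Ioc (0 : ℝ) 1, ε ^ 2 = Z⁻¹ :=
    ⟨(√Z)⁻¹, ⟨by positivity, inv_le_one_of_one_le₀ (one_le_sqrt.2 hZ)⟩,
      by rw [inv_pow, sq_sqrt hZ0.le]⟩
  have hnash := h.lintegral_enorm_sq_le_nash hf hε
  have hhalf : 2 * (ENNReal.ofReal (2 ^ n * (ε * Metric.diam Ω) ^ 2) *
      ∫⁻ x, ‖fderiv ℝ f x‖ₑ ^ 2 ∂P) ≤ a / 2 := by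
    have hsplit : 2 * ENNReal.ofReal (2 ^ n * (ε * Metric.diam Ω) ^ 2) =
        ENNReal.ofReal (2 * Z)⁻¹ * ENNReal.ofReal (4 * 2 ^ n * Metric.diam Ω ^ 2) := by
      rw [← ENNReal.ofReal_ofNat 2, ← ENNReal.ofReal_mul zero_le_two,
        ← ENNReal.ofReal_mul (by positivity), mul_pow, hεsq, mul_inv]
      congr 1
      ring
    rw [← mul_assoc, hsplit, mul_assoc]
    grw [henergy]
    rw [← mul_assoc, ← ENNReal.ofReal_mul (by positivity), mul_inv, inv_mul_cancel_right₀ hZ0.ne',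
      ENNReal.ofReal_inv_of_pos zero_lt_two, ENNReal.ofReal_ofNat, ENNReal.div_eq_inv_mul]
  have hpow : ENNReal.ofReal (ε ^ n)⁻¹ ^ 2 = ENNReal.ofReal (Z ^ n) := by
    rw [← ENNReal.ofReal_pow (by have := hε.1; positivity), inv_pow, ← pow_mul, mul_comm, pow_mul,
      hεsq, inv_pow, inv_inv]
  rw [mul_pow (ENNReal.ofReal _), hpow] at hnash
  have habsorb : a / 2 ≤ 2 * (ENNReal.ofReal (Z ^ n) * (∫⁻ x, ‖f x‖ₑ ∂P) ^ 2) := by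
    refine (ENNReal.add_le_add_iff_left (ENNReal.div_ne_top hfin two_ne_zero)).1 ?_
    rw [ENNReal.add_halves]
    exact hnash.trans (by gcongr)
  calc a = 2 * (a / 2) := (ENNReal.mul_div_cancel two_ne_zero ENNReal.ofNat_ne_top).symm
    _ ≤ 2 * (2 * (ENNReal.ofReal (Z ^ n) * (∫⁻ x, ‖f x‖ₑ ∂P) ^ 2)) := by gcongr
    _ = _ := by ring

end IsContractingDomain

end ContractingDomain

/-! ### Moser iteration -/

section Moser

theorem eq_zero_of_forall_mul_pow_le_pow {c x y : ℝ≥0∞} (hyx : y < x) {k : ℕ → ℕ}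
    (hk : Tendsto k atTop atTop) (h : ∀ j, c * x ^ k j ≤ y ^ k j) : c = 0 := by
  have hratio : y / x < 1 :=
    (ENNReal.div_lt_iff (.inl hyx.ne_bot) (.inr hyx.ne_top)).2 (by simpa using hyx)
  have hle (j : ℕ) : c ≤ (y / x) ^ k j := by
    rw [div_eq_mul_inv, mul_pow, ← ENNReal.inv_pow, ← div_eq_mul_inv]
    exact (ENNReal.le_div_iff_mul_le (.inl (pow_ne_zero _ hyx.ne_bot))
      (.inr (ENNReal.pow_ne_top hyx.ne_top))).2 (h j)
  exact nonpos_iff_eq_zero.1 <|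
    ge_of_tendsto' ((ENNReal.tendsto_pow_atTop_nhds_zero_of_lt_one hratio).comp hk) hle

variable {α : Type*} [MeasurableSpace α] {ν : Measure α} {g : α → ℝ≥0∞} {K a : ℝ≥0∞}

/-- `J k = K a ^ (k + 1) ∫ g ^ (2 ^ k)` satisfies `J (k + 1) ≤ J k ^ 2`. -/
theorem const_mul_lintegral_pow_le_of_moser
    (h : ∀ k, ∫⁻ x, g x ^ 2 ^ (k + 1) ∂ν ≤ K * a ^ k * (∫⁻ x, g x ^ 2 ^ k ∂ν) ^ 2) (k : ℕ) :
    K * a ^ (k + 1) * ∫⁻ x, g x ^ 2 ^ k ∂ν ≤ (K * a * ∫⁻ x, g x ∂ν) ^ 2 ^ k := by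
  induction k with
  | zero => simp
  | succ k ih =>
    calc K * a ^ (k + 2) * ∫⁻ x, g x ^ 2 ^ (k + 1) ∂ν
        ≤ K * a ^ (k + 2) * (K * a ^ k * (∫⁻ x, g x ^ 2 ^ k ∂ν) ^ 2) := by gcongr; exact h k
      _ = (K * a ^ (k + 1) * ∫⁻ x, g x ^ 2 ^ k ∂ν) ^ 2 := by ring
      _ ≤ ((K * a * ∫⁻ x, g x ∂ν) ^ 2 ^ k) ^ 2 := by gcongr
      _ = (K * a * ∫⁻ x, g x ∂ν) ^ 2 ^ (k + 1) := by rw [← pow_mul, ← pow_succ]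

theorem ae_le_of_moser (hg : AEMeasurable g ν) (hK : K ≠ 0) (ha : 1 ≤ a)
    (h : ∀ k, ∫⁻ x, g x ^ 2 ^ (k + 1) ∂ν ≤ K * a ^ k * (∫⁻ x, g x ^ 2 ^ k ∂ν) ^ 2) :
    ∀ᵐ x ∂ν, g x ≤ K * a * ∫⁻ x, g x ∂ν := by
  refine (ae_le_const_iff_forall_gt_measure_zero _ _).2 fun M hM => ?_
  refine (mul_eq_zero.1 (eq_zero_of_forall_mul_pow_le_pow hM
    (tendsto_pow_atTop_atTop_of_one_lt one_lt_two) fun k => ?_)).resolve_left hK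
  have hmarkov : M ^ 2 ^ k * ν {x | M ≤ g x} ≤ ∫⁻ x, g x ^ 2 ^ k ∂ν := by
    have hsub : {x | M ≤ g x} ⊆ {x | M ^ 2 ^ k ≤ g x ^ 2 ^ k} := fun x hx =>
      pow_le_pow_left' (M := ℝ≥0∞) hx (2 ^ k)
    grw [← mul_meas_ge_le_lintegral₀ (hg.pow_const _) (M ^ 2 ^ k), hsub]
  calc K * ν {x | M ≤ g x} * M ^ 2 ^ k = K * 1 * (M ^ 2 ^ k * ν {x | M ≤ g x}) := by ring
    _ ≤ K * a ^ (k + 1) * ∫⁻ x, g x ^ 2 ^ k ∂ν := by gcongr; exact one_le_pow₀ ha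
    _ ≤ (K * a * ∫⁻ x, g x ∂ν) ^ 2 ^ k := const_mul_lintegral_pow_le_of_moser h k

end Moser

/-! ### The Euler–Lagrange equation -/

section PoincareExtremal

variable {E : Type*} [NormedAddCommGroup E] [NormedSpace ℝ E] [MeasurableSpace E] {Ω : Set E}
  {P : Measure E} {lam : ℝ} {u : E → ℝ} {H : ℝ → ℝ} {L : ℝ≥0}

/-- `lam` is a Poincaré constant of the measure `P` on `Ω`, attained by `u`: among functions that
are `C¹` on `Ω` with finite energy, `lam` is the infimum of the energy over the variance, and `u`
attains it. -/
structure IsPoincareExtremal (Ω : Set E) (P : Measure E) (lam : ℝ) (u : E → ℝ) : Prop where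
  contDiffOn : ContDiffOn ℝ 1 u Ω
  memLp : MemLp u 2 P
  memLp_fderiv : MemLp (fderiv ℝ u) 2 P
  energy_eq : ∫ x, ‖fderiv ℝ u x‖ ^ 2 ∂P = lam * Var[u; P]
  poincare : ∀ w : E → ℝ, ContDiffOn ℝ 1 w Ω → MemLp w 2 P → MemLp (fderiv ℝ w) 2 P →
    lam * Var[w; P] ≤ ∫ x, ‖fderiv ℝ w x‖ ^ 2 ∂P

theorem eq_zero_of_forall_two_mul_add_sq_nonneg {b c : ℝ} (h : ∀ r : ℝ, 0 ≤ 2 * r * b + r ^ 2 * c) :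
    b = 0 := by
  have hdiscrim := discrim_le_zero (a := c) (b := 2 * b) (c := 0) fun r => by linarith [h r]
  rw [discrim] at hdiscrim
  nlinarith [sq_nonneg b]

theorem ae_fderiv_comp (hΩ : IsOpen Ω) (hP : ∀ᵐ x ∂P, x ∈ Ω) (hu : ContDiffOn ℝ 1 u Ω)
    (hH : ContDiff ℝ 1 H) : ∀ᵐ x ∂P, fderiv ℝ (H ∘ u) x = deriv H (u x) • fderiv ℝ u x := by
  filter_upwards [hP] with x hx
  have hux : DifferentiableAt ℝ u x :=
    (hu.differentiableOn one_ne_zero).differentiableAt (hΩ.mem_nhds hx)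
  have hHx : HasDerivAt H (deriv H (u x)) (u x) :=
    (hH.differentiable one_ne_zero).differentiableAt.hasDerivAt
  exact (hHx.comp_hasFDerivAt x hux.hasFDerivAt).fderiv

theorem integral_norm_fderiv_comp_sq (hΩ : IsOpen Ω) (hP : ∀ᵐ x ∂P, x ∈ Ω)
    (hu : ContDiffOn ℝ 1 u Ω) (hH : ContDiff ℝ 1 H) :
    ∫ x, ‖fderiv ℝ (H ∘ u) x‖ ^ 2 ∂P = ∫ x, deriv H (u x) ^ 2 * ‖fderiv ℝ u x‖ ^ 2 ∂P := by
  refine integral_congr_ae ((ae_fderiv_comp hΩ hP hu hH).mono fun x hx => ?_)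
  simp only [hx, norm_smul, mul_pow, norm_eq_abs, sq_abs]

namespace IsPoincareExtremal

theorem memLp_fderiv_comp (hu : IsPoincareExtremal Ω P lam u) (hΩ : IsOpen Ω)
    (hP : ∀ᵐ x ∂P, x ∈ Ω) (hH : ContDiff ℝ 1 H) (hL : LipschitzWith L H) :
    MemLp (fderiv ℝ (H ∘ u)) 2 P := by
  have hae := ae_fderiv_comp hΩ hP hu.contDiffOn hH
  refine hu.memLp_fderiv.of_le_mul (c := L) ?_ (hae.mono fun x hx => ?_)
  · have hderiv := (hH.continuous_deriv le_rfl).comp_aestronglyMeasurable hu.memLp.1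
    exact (hderiv.smul hu.memLp_fderiv.1).congr (hae.mono fun x hx => hx.symm)
  · rw [hx, norm_smul]
    gcongr
    exact norm_deriv_le_of_lipschitz hL

theorem poincare_comp [IsFiniteMeasure P] (hu : IsPoincareExtremal Ω P lam u) (hΩ : IsOpen Ω)
    (hP : ∀ᵐ x ∂P, x ∈ Ω) (hH : ContDiff ℝ 1 H) (hL : LipschitzWith L H) :
    lam * Var[H ∘ u; P] ≤ ∫ x, deriv H (u x) ^ 2 * ‖fderiv ℝ u x‖ ^ 2 ∂P := by
  rw [← integral_norm_fderiv_comp_sq hΩ hP hu.contDiffOn hH]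
  exact hu.poincare _ (hH.comp_contDiffOn hu.contDiffOn) (memLp_comp_of_lipschitzWith hL hu.memLp)
    (hu.memLp_fderiv_comp hΩ hP hH hL)

theorem integrable_mul_norm_fderiv_sq (hu : IsPoincareExtremal Ω P lam u) {b : ℝ → ℝ} {M : ℝ}
    (hb : Continuous b) (hM : ∀ s, ‖b s‖ ≤ M) :
    Integrable (fun x => b (u x) * ‖fderiv ℝ u x‖ ^ 2) P :=
  hu.memLp_fderiv.norm.integrable_sq.bdd_mul (hb.comp_aestronglyMeasurable hu.memLp.1)
    (ae_of_all _ fun x => hM (u x))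

theorem integral_deriv_id_add_const_mul_sq (hu : IsPoincareExtremal Ω P lam u)
    (hH : ContDiff ℝ 1 H) (hL : LipschitzWith L H) (r : ℝ) :
    ∫ x, deriv (fun s => s + r * H s) (u x) ^ 2 * ‖fderiv ℝ u x‖ ^ 2 ∂P =
      ∫ x, ‖fderiv ℝ u x‖ ^ 2 ∂P + 2 * r * ∫ x, deriv H (u x) * ‖fderiv ℝ u x‖ ^ 2 ∂P +
        r ^ 2 * ∫ x, deriv H (u x) ^ 2 * ‖fderiv ℝ u x‖ ^ 2 ∂P := by
  have hderiv (s : ℝ) : deriv (fun s => s + r * H s) s = 1 + r * deriv H s :=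
    ((hasDerivAt_id s).add ((hH.differentiable one_ne_zero s).hasDerivAt.const_mul r)).deriv
  have hcont : Continuous (deriv H) := hH.continuous_deriv le_rfl
  have hbound (s : ℝ) : ‖deriv H s‖ ≤ L := norm_deriv_le_of_lipschitz hL
  have hint₀ := hu.memLp_fderiv.norm.integrable_sq
  have hint₁ := hu.integrable_mul_norm_fderiv_sq hcont hbound
  have hint₂ := hu.integrable_mul_norm_fderiv_sq (b := fun s => deriv H s ^ 2) (hcont.pow 2)
    (M := L ^ 2) fun s => by
      rw [norm_pow]
      exact pow_le_pow_left₀ (norm_nonneg _) (hbound s) 2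
  have hexpand (x : E) : deriv (fun s => s + r * H s) (u x) ^ 2 * ‖fderiv ℝ u x‖ ^ 2 =
      ‖fderiv ℝ u x‖ ^ 2 + 2 * r * (deriv H (u x) * ‖fderiv ℝ u x‖ ^ 2) +
        r ^ 2 * (deriv H (u x) ^ 2 * ‖fderiv ℝ u x‖ ^ 2) := by
    rw [hderiv]
    ring
  simp_rw [hexpand]
  rw [integral_add (by exact hint₀.add (hint₁.const_mul _)) (hint₂.const_mul _),
    integral_add hint₀ (hint₁.const_mul _), integral_const_mul, integral_const_mul]

/-- The Euler–Lagrange equation, from the first variation along `u + r • H ∘ u`. -/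
theorem integral_deriv_mul_norm_fderiv_sq [IsFiniteMeasure P] (hu : IsPoincareExtremal Ω P lam u)
    (hΩ : IsOpen Ω) (hP : ∀ᵐ x ∂P, x ∈ Ω) (hH : ContDiff ℝ 1 H) (hL : LipschitzWith L H) :
    ∫ x, deriv H (u x) * ‖fderiv ℝ u x‖ ^ 2 ∂P = lam * cov[u, H ∘ u; P] := by
  refine sub_eq_zero.1 (eq_zero_of_forall_two_mul_add_sq_nonneg
    (c := ∫ x, deriv H (u x) ^ 2 * ‖fderiv ℝ u x‖ ^ 2 ∂P - lam * Var[H ∘ u; P]) fun r => ?_)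
  have hvar : Var[(fun s => s + r * H s) ∘ u; P] =
      Var[u; P] + 2 * (r * cov[u, H ∘ u; P]) + r ^ 2 * Var[H ∘ u; P] := by
    rw [← variance_const_mul, ← covariance_const_mul_right]
    exact variance_add hu.memLp ((memLp_comp_of_lipschitzWith hL hu.memLp).const_mul r)
  have hlip : LipschitzWith (1 + ‖r‖₊ * L) fun s => s + r * H s :=
    LipschitzWith.id.add ((lipschitzWith_smul r).comp hL)
  have h := hu.poincare_comp hΩ hP (contDiff_id.add (contDiff_const.mul hH)) hlip
  simp only [id_eq] at h
  rw [hvar, hu.integral_deriv_id_add_const_mul_sq hH hL, hu.energy_eq] at h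
  linarith

end IsPoincareExtremal

end PoincareExtremal

/-! ### Truncated powers -/

section TruncatedPower

theorem contDiff_one_intervalIntegral {b : ℝ → ℝ} (hb : Continuous b) :
    ContDiff ℝ 1 fun s => ∫ r in (0 : ℝ)..s, b r := by
  have hderiv : deriv (fun s => ∫ r in (0 : ℝ)..s, b r) = b :=
    funext fun s => hb.deriv_integral b 0 s
  refine contDiff_one_iff_deriv.2 ⟨fun s => ?_, by rwa [hderiv]⟩
  exact (hb.integral_hasStrictDerivAt 0 s).hasDerivAt.differentiableAt

theorem lipschitzWith_intervalIntegral {b : ℝ → ℝ} {M : ℝ≥0} (hb : Continuous b)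
    (hM : ∀ s, ‖b s‖ ≤ M) : LipschitzWith M fun s => ∫ r in (0 : ℝ)..s, b r :=
  lipschitzWith_of_nnnorm_deriv_le ((contDiff_one_intervalIntegral hb).differentiable one_ne_zero)
    fun s => by simpa only [hb.deriv_integral b 0 s, ← NNReal.coe_le_coe, coe_nnnorm] using hM s

variable {q : ℕ} {T θ : ℝ}

/-- The derivative of `truncPow q T`: that of `s ^ (q + 1)` at the truncation of `s` to
`[-T, T]`. -/
def truncPowDeriv (q : ℕ) (T s : ℝ) : ℝ :=
  (q + 1) * max (-T) (min s T) ^ q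

/-- The power `|s| ^ (q + 1)` for `|s| ≤ T`, continued affinely beyond; this is the intended
meaning only for odd `q` and `0 ≤ T`. It is the Lipschitz test function of the Moser iteration. -/
def truncPow (q : ℕ) (T s : ℝ) : ℝ :=
  ∫ r in (0 : ℝ)..s, truncPowDeriv q T r

/-- The primitive of the square of `truncPowDeriv q T`. Testing the Euler–Lagrange equation of `u`
against `truncPowEnergy q T ∘ u` produces the energy of `truncPow q T ∘ u`. -/
def truncPowEnergy (q : ℕ) (T s : ℝ) : ℝ :=
  ∫ r in (0 : ℝ)..s, truncPowDeriv q T r ^ 2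

theorem continuous_truncPowDeriv (q : ℕ) (T : ℝ) : Continuous (truncPowDeriv q T) := by
  unfold truncPowDeriv
  fun_prop

theorem abs_truncPowDeriv (q : ℕ) (hT : 0 ≤ T) (s : ℝ) :
    |truncPowDeriv q T s| = (q + 1) * min |s| T ^ q := by
  have htrunc : |max (-T) (min s T)| = min |s| T := by grind
  rw [truncPowDeriv, abs_mul, abs_pow, htrunc, abs_of_nonneg (by positivity)]

theorem mul_truncPowDeriv_mul (hq : Odd q) (hT : 0 ≤ T) (s : ℝ) (hθ : 0 ≤ θ) :
    s * truncPowDeriv q T (s * θ) = (q + 1) * (|s| * min (|s| * θ) T ^ q) := by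
  have hsign : 0 ≤ s * max (-T) (min (s * θ) T) ^ q := by
    rcases le_total 0 s with hs | hs
    · exact mul_nonneg hs (pow_nonneg (le_max_of_le_right (le_min (mul_nonneg hs hθ) hT)) q)
    · refine mul_nonneg_of_nonpos_of_nonpos hs (hq.pow_nonpos (max_le (neg_nonpos.2 hT) ?_))
      exact min_le_of_left_le (mul_nonpos_of_nonpos_of_nonneg hs hθ)
  have habs := abs_truncPowDeriv q hT (s * θ)
  rw [abs_mul s θ, abs_of_nonneg hθ] at habs
  have hnonneg : 0 ≤ s * truncPowDeriv q T (s * θ) := by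
    rw [truncPowDeriv, mul_left_comm]
    positivity
  rw [← abs_of_nonneg hnonneg, abs_mul, habs, mul_left_comm]

theorem truncPow_eq_integral_zero_one (hq : Odd q) (hT : 0 ≤ T) (s : ℝ) :
    truncPow q T s = ∫ θ in (0 : ℝ)..1, (q + 1) * (|s| * min (|s| * θ) T ^ q) := by
  have hscale := intervalIntegral.mul_integral_comp_mul_left (a := 0) (b := 1)
    (f := truncPowDeriv q T) s
  rw [mul_zero, mul_one] at hscale
  rw [truncPow, ← hscale, ← intervalIntegral.integral_const_mul]
  refine intervalIntegral.integral_congr fun θ hθ => ?_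
  rw [uIcc_of_le zero_le_one] at hθ
  exact mul_truncPowDeriv_mul hq hT s hθ.1

theorem integral_zero_one_succ_mul_pow (q : ℕ) (a c : ℝ) :
    ∫ θ in (0 : ℝ)..1, (q + 1) * (a * (c * θ) ^ q) = a * c ^ q := by
  simp_rw [mul_pow, ← mul_assoc]
  rw [intervalIntegral.integral_const_mul, integral_pow, one_pow, zero_pow q.succ_ne_zero, sub_zero]
  field_simp

theorem truncPow_of_abs_le (hq : Odd q) {s : ℝ} (hs : |s| ≤ T) :
    truncPow q T s = |s| ^ (q + 1) := by
  rw [truncPow_eq_integral_zero_one hq ((abs_nonneg s).trans hs), pow_succ',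
    ← integral_zero_one_succ_mul_pow]
  refine intervalIntegral.integral_congr fun θ hθ => ?_
  rw [uIcc_of_le zero_le_one] at hθ
  simp only [min_eq_left ((mul_le_of_le_one_right (abs_nonneg s) hθ.2).trans hs)]

theorem truncPow_le_abs_pow (hq : Odd q) (hT : 0 ≤ T) (s : ℝ) :
    truncPow q T s ≤ |s| ^ (q + 1) := by
  rw [truncPow_eq_integral_zero_one hq hT, pow_succ', ← integral_zero_one_succ_mul_pow]
  refine intervalIntegral.integral_mono_on zero_le_one
    (Continuous.intervalIntegrable (by fun_prop) _ _)
    (Continuous.intervalIntegrable (by fun_prop) _ _) fun θ hθ => ?_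
  have := hθ.1
  gcongr
  exact min_le_left _ _

theorem abs_mul_min_pow_le_truncPow (hq : Odd q) (hT : 0 ≤ T) (s : ℝ) :
    |s| * min |s| T ^ q ≤ truncPow q T s := by
  rw [truncPow_eq_integral_zero_one hq hT, ← integral_zero_one_succ_mul_pow]
  refine intervalIntegral.integral_mono_on zero_le_one
    (Continuous.intervalIntegrable (by fun_prop) _ _)
    (Continuous.intervalIntegrable (by fun_prop) _ _) fun θ hθ => ?_
  have := hθ.1
  gcongr
  rw [min_mul_of_nonneg _ _ hθ.1]
  gcongr
  exact mul_le_of_le_one_right hT hθ.2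

theorem truncPow_nonneg (hq : Odd q) (hT : 0 ≤ T) (s : ℝ) : 0 ≤ truncPow q T s :=
  le_trans (by positivity) (abs_mul_min_pow_le_truncPow hq hT s)

theorem mul_truncPowEnergy_le (hq : Odd q) (hT : 0 ≤ T) (s : ℝ) :
    s * truncPowEnergy q T s ≤ (q + 1) ^ 2 * truncPow q T s ^ 2 := by
  have hscale := intervalIntegral.mul_integral_comp_mul_left (a := 0) (b := 1)
    (f := fun r => truncPowDeriv q T r ^ 2) s
  rw [mul_zero, mul_one] at hscale
  calc s * truncPowEnergy q T s = ∫ θ in (0 : ℝ)..1, (s * truncPowDeriv q T (s * θ)) ^ 2 := by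
        rw [truncPowEnergy, ← hscale, ← mul_assoc, ← intervalIntegral.integral_const_mul]
        simp only [mul_pow, sq s]
    _ ≤ ∫ _ in (0 : ℝ)..1, ((q + 1) * (|s| * min |s| T ^ q)) ^ 2 := by
        have hcont := continuous_truncPowDeriv q T
        refine intervalIntegral.integral_mono_on zero_le_one
          (Continuous.intervalIntegrable (by fun_prop) _ _) (by simp) fun θ hθ => ?_
        have := hθ.1
        rw [mul_truncPowDeriv_mul hq hT s hθ.1]
        gcongr
        exact mul_le_of_le_one_right (abs_nonneg s) hθ.2
    _ = (q + 1) ^ 2 * (|s| * min |s| T ^ q) ^ 2 := by simp [mul_pow]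
    _ ≤ (q + 1) ^ 2 * truncPow q T s ^ 2 := by
        gcongr
        exact abs_mul_min_pow_le_truncPow hq hT s

theorem deriv_truncPow (q : ℕ) (T s : ℝ) : deriv (truncPow q T) s = truncPowDeriv q T s :=
  (continuous_truncPowDeriv q T).deriv_integral _ 0 s

theorem deriv_truncPowEnergy (q : ℕ) (T s : ℝ) :
    deriv (truncPowEnergy q T) s = truncPowDeriv q T s ^ 2 :=
  ((continuous_truncPowDeriv q T).pow 2).deriv_integral _ 0 s

theorem contDiff_truncPow (q : ℕ) (T : ℝ) : ContDiff ℝ 1 (truncPow q T) :=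
  contDiff_one_intervalIntegral (continuous_truncPowDeriv q T)

theorem contDiff_truncPowEnergy (q : ℕ) (T : ℝ) : ContDiff ℝ 1 (truncPowEnergy q T) :=
  contDiff_one_intervalIntegral ((continuous_truncPowDeriv q T).pow 2)

theorem abs_truncPowDeriv_le (q : ℕ) (hT : 0 ≤ T) (s : ℝ) :
    |truncPowDeriv q T s| ≤ (q + 1) * T ^ q := by
  rw [abs_truncPowDeriv q hT]
  gcongr
  exact min_le_right _ _

theorem exists_lipschitzWith_truncPow (q : ℕ) (hT : 0 ≤ T) : ∃ L, LipschitzWith L (truncPow q T) :=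
  ⟨⟨(q + 1) * T ^ q, by positivity⟩,
    lipschitzWith_intervalIntegral (continuous_truncPowDeriv q T) (abs_truncPowDeriv_le q hT)⟩

theorem exists_lipschitzWith_truncPowEnergy (q : ℕ) (hT : 0 ≤ T) :
    ∃ L, LipschitzWith L (truncPowEnergy q T) :=
  ⟨⟨((q + 1) * T ^ q) ^ 2, by positivity⟩,
    lipschitzWith_intervalIntegral ((continuous_truncPowDeriv q T).pow 2) fun s => by
      rw [norm_pow]
      exact pow_le_pow_left₀ (abs_nonneg _) (abs_truncPowDeriv_le q hT s) 2⟩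

end TruncatedPower

/-! ### The sup bound for extremals -/

namespace IsPoincareExtremal

variable {E : Type*} [NormedAddCommGroup E] [NormedSpace ℝ E] [MeasurableSpace E] {Ω : Set E}
  {P : Measure E} [IsProbabilityMeasure P] {lam : ℝ} {u : E → ℝ} {n q : ℕ} {T : ℝ}

theorem integral_norm_fderiv_truncPow_comp_sq_le (hu : IsPoincareExtremal Ω P lam u)
    (hΩ : IsOpen Ω) (hP : ∀ᵐ x ∂P, x ∈ Ω) (hlam : 0 ≤ lam) (hmean : ∫ x, u x ∂P = 0) (hq : Odd q)
    (hT : 0 ≤ T) :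
    ∫ x, ‖fderiv ℝ (truncPow q T ∘ u) x‖ ^ 2 ∂P ≤
      lam * (q + 1) ^ 2 * ∫ x, ‖(truncPow q T ∘ u) x‖ ^ 2 ∂P := by
  obtain ⟨_, hLip⟩ := exists_lipschitzWith_truncPow q hT
  obtain ⟨_, hLip'⟩ := exists_lipschitzWith_truncPowEnergy q hT
  have hF := memLp_comp_of_lipschitzWith hLip hu.memLp
  have hG := memLp_comp_of_lipschitzWith hLip' hu.memLp
  calc ∫ x, ‖fderiv ℝ (truncPow q T ∘ u) x‖ ^ 2 ∂P
      = ∫ x, deriv (truncPowEnergy q T) (u x) * ‖fderiv ℝ u x‖ ^ 2 ∂P := by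
        rw [integral_norm_fderiv_comp_sq hΩ hP hu.contDiffOn (contDiff_truncPow q T)]
        simp only [deriv_truncPow, deriv_truncPowEnergy]
    _ = lam * ∫ x, u x * truncPowEnergy q T (u x) ∂P := by
        rw [hu.integral_deriv_mul_norm_fderiv_sq hΩ hP (contDiff_truncPowEnergy q T) hLip',
          covariance_eq_sub hu.memLp hG, hmean, zero_mul, sub_zero]
        rfl
    _ ≤ lam * ∫ x, (q + 1) ^ 2 * truncPow q T (u x) ^ 2 ∂P := by
        gcongr ?_ * ?_
        exact integral_mono (hu.memLp.integrable_mul hG) (hF.integrable_sq.const_mul _)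
          fun x => mul_truncPowEnergy_le hq hT (u x)
    _ = lam * (q + 1) ^ 2 * ∫ x, ‖(truncPow q T ∘ u) x‖ ^ 2 ∂P := by
        simp only [integral_const_mul, ← mul_assoc, norm_eq_abs, sq_abs, Function.comp_apply]

variable [BorelSpace E] [SecondCountableTopology E]

theorem lintegral_enorm_truncPow_comp_sq_le (hu : IsPoincareExtremal Ω P lam u)
    (h : IsContractingDomain Ω n P) (hlam : 0 ≤ lam) (hmean : ∫ x, u x ∂P = 0)
    (hZ : 1 ≤ 2 ^ n * Metric.diam Ω ^ 2 * lam) (hq : Odd q) (hT : 0 ≤ T) :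
    ∫⁻ x, ‖truncPow q T (u x)‖ₑ ^ 2 ∂P ≤
      4 * ENNReal.ofReal ((4 * (2 ^ n * Metric.diam Ω ^ 2 * lam) * (q + 1) ^ 2) ^ n) *
        (∫⁻ x, ‖u x‖ₑ ^ (q + 1) ∂P) ^ 2 := by
  obtain ⟨_, hLip⟩ := exists_lipschitzWith_truncPow q hT
  have hF := memLp_comp_of_lipschitzWith hLip hu.memLp
  have hF' := hu.memLp_fderiv_comp h.isOpen h.ae_mem (contDiff_truncPow q T) hLip
  have hpow (x : E) : ‖truncPow q T (u x)‖ₑ ≤ ‖u x‖ₑ ^ (q + 1) := by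
    rw [← enorm_pow, enorm_le_iff_norm_le, norm_of_nonneg (truncPow_nonneg hq hT _), norm_pow]
    exact truncPow_le_abs_pow hq hT (u x)
  refine (h.lintegral_enorm_sq_le_reverseHolder (f := truncPow q T ∘ u)
    (Z := 4 * (2 ^ n * Metric.diam Ω ^ 2 * lam) * (q + 1) ^ 2)
    ((contDiff_truncPow q T).comp_contDiffOn hu.contDiffOn) ?_ ?_ ?_).trans ?_
  · rw [lintegral_enorm_sq_eq_ofReal_integral hF]
    exact ENNReal.ofReal_ne_top
  · have hq1 : (1 : ℝ) ≤ (q + 1) ^ 2 := one_le_pow₀ (by linarith [(q.cast_nonneg : (0 : ℝ) ≤ q)])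
    nlinarith
  · rw [lintegral_enorm_sq_eq_ofReal_integral hF, lintegral_enorm_sq_eq_ofReal_integral hF',
      ← ENNReal.ofReal_mul (by positivity), ← ENNReal.ofReal_mul (by positivity)]
    grw [hu.integral_norm_fderiv_truncPow_comp_sq_le h.isOpen h.ae_mem hlam hmean hq hT]
    apply le_of_eq
    ring_nf
  · gcongr with x
    exact hpow x

theorem lintegral_enorm_pow_le_sq (hu : IsPoincareExtremal Ω P lam u)
    (h : IsContractingDomain Ω n P) (hlam : 0 ≤ lam) (hmean : ∫ x, u x ∂P = 0)
    (hZ : 1 ≤ 2 ^ n * Metric.diam Ω ^ 2 * lam) {p : ℕ} (hp : Even p) (hp0 : p ≠ 0) :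
    ∫⁻ x, ‖u x‖ₑ ^ (2 * p) ∂P ≤
      4 * ENNReal.ofReal ((4 * (2 ^ n * Metric.diam Ω ^ 2 * lam) * p ^ 2) ^ n) *
        (∫⁻ x, ‖u x‖ₑ ^ p ∂P) ^ 2 := by
  obtain ⟨q, rfl⟩ := Nat.exists_eq_succ_of_ne_zero hp0
  have hq : Odd q := Nat.not_even_iff_odd.1 (Nat.even_add_one.1 hp)
  rw [Nat.cast_succ, Nat.succ_eq_add_one]
  have hlim (x : E) : liminf (fun k : ℕ => ‖truncPow q k (u x)‖ₑ ^ 2) atTop =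
      ‖u x‖ₑ ^ (2 * (q + 1)) := by
    refine (tendsto_const_nhds.congr' ?_).liminf_eq
    filter_upwards [eventually_ge_atTop ⌈|u x|⌉₊] with k hk
    rw [truncPow_of_abs_le hq (Nat.ceil_le.1 hk), enorm_pow, Real.enorm_abs, ← pow_mul, mul_comm]
  have hmeas (k : ℕ) : AEMeasurable (fun x => ‖truncPow q k (u x)‖ₑ ^ 2) P :=
    ((contDiff_truncPow q k).continuous.comp_aestronglyMeasurable hu.memLp.1).enorm.pow_const 2
  simp_rw [← hlim]
  exact (lintegral_liminf_le' hmeas).trans <| liminf_le_of_le (by isBoundedDefault) fun b hb =>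
    let ⟨k, hk⟩ := hb.exists
    hk.trans (hu.lintegral_enorm_truncPow_comp_sq_le h hlam hmean hZ hq k.cast_nonneg)

theorem one_le_two_pow_mul_diam_sq_mul (hu : IsPoincareExtremal Ω P lam u)
    (h : IsContractingDomain Ω n P) (hmean : ∫ x, u x ∂P = 0) (hvar : 0 < Var[u; P]) :
    1 ≤ 2 ^ n * Metric.diam Ω ^ 2 * lam := by
  have hpoincare := h.lintegral_enorm_sq_le_poincare hu.contDiffOn
    (hu.memLp.integrable one_le_two) hmean
  rw [lintegral_enorm_sq_eq_ofReal_integral hu.memLp,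
    lintegral_enorm_sq_eq_ofReal_integral hu.memLp_fderiv, hu.energy_eq,
    ← ENNReal.ofReal_mul (by positivity)] at hpoincare
  have hvar_eq : Var[u; P] = ∫ x, ‖u x‖ ^ 2 ∂P := by
    simpa using variance_of_integral_eq_zero hu.memLp.1.aemeasurable hmean
  rw [← hvar_eq, ENNReal.ofReal_le_ofReal_iff'] at hpoincare
  have := hpoincare.resolve_right hvar.not_ge
  rw [← mul_assoc] at this
  exact (le_mul_iff_one_le_left hvar).1 this

theorem ae_sq_le (hu : IsPoincareExtremal Ω P lam u)
    (h : IsContractingDomain Ω n P) (hlam : 0 ≤ lam) (hmean : ∫ x, u x ∂P = 0)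
    (hvar : 0 < Var[u; P]) :
    ∀ᵐ x ∂P, u x ^ 2 ≤ 4 * (64 * (2 ^ n * Metric.diam Ω ^ 2 * lam)) ^ n * ∫ x, u x ^ 2 ∂P := by
  have hZ := hu.one_le_two_pow_mul_diam_sq_mul h hmean hvar
  have hstep (k : ℕ) := hu.lintegral_enorm_pow_le_sq h hlam hmean hZ (p := 2 ^ (k + 1))
    (even_two.pow_of_ne_zero k.succ_ne_zero) (by positivity)
  set Z := 2 ^ n * Metric.diam Ω ^ 2 * lam
  have hconst (k : ℕ) : 4 * ENNReal.ofReal ((4 * Z * (2 ^ (k + 1) : ℕ) ^ 2) ^ n) =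
      ENNReal.ofReal (4 * (16 * Z) ^ n) * ENNReal.ofReal (4 ^ n) ^ k := by
    have hbase : 4 * Z * (2 ^ (k + 1) : ℕ) ^ 2 = 16 * Z * 4 ^ k := by
      rw [show (4 : ℝ) ^ k = (2 ^ k) ^ 2 by rw [pow_right_comm]; norm_num]
      push_cast
      ring
    rw [hbase, mul_pow _ (4 ^ k) n, pow_right_comm, ENNReal.ofReal_mul (by positivity),
      ENNReal.ofReal_mul (by positivity), ENNReal.ofReal_ofNat, mul_assoc,
      ENNReal.ofReal_pow (by positivity) k]
  have hmoser (k : ℕ) : ∫⁻ x, (‖u x‖ₑ ^ 2) ^ 2 ^ (k + 1) ∂P ≤ ENNReal.ofReal (4 * (16 * Z) ^ n) *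
      ENNReal.ofReal (4 ^ n) ^ k * (∫⁻ x, (‖u x‖ₑ ^ 2) ^ 2 ^ k ∂P) ^ 2 := by
    simpa only [hconst, ← pow_mul, ← pow_succ'] using hstep k
  have hbound := ae_le_of_moser (hu.memLp.1.enorm.pow_const 2)
    (ENNReal.ofReal_pos.2 (by positivity)).ne'
    (ENNReal.one_le_ofReal.2 (one_le_pow₀ (by norm_num))) hmoser
  filter_upwards [hbound] with x hx
  rw [lintegral_enorm_sq_eq_ofReal_integral hu.memLp, ← ENNReal.ofReal_mul (by positivity),
    ← ENNReal.ofReal_mul (by positivity), ← ofReal_norm, ← ENNReal.ofReal_pow (norm_nonneg _),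
    ENNReal.ofReal_le_ofReal_iff (by positivity)] at hx
  simp only [norm_eq_abs, sq_abs] at hx
  rwa [mul_assoc 4, ← mul_pow, mul_right_comm 16 Z 4, show (16 : ℝ) * 4 = 64 by norm_num] at hx

end IsPoincareExtremal

/-! ### Weighted eigenvalues as Poincaré constants -/

section WeightMeasure

variable {E F : Type*} [MeasurableSpace E] [NormedAddCommGroup F] {μ : Measure E} {Ω : Set E}
  {φ : E → ℝ}

/-- The probability measure `φ μ / ∫_Ω φ dμ` on `Ω`. -/
def weightMeasure (μ : Measure E) (Ω : Set E) (φ : E → ℝ) : Measure E :=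
  (ENNReal.ofReal (∫ x in Ω, φ x ∂μ))⁻¹ •
    (μ.restrict Ω).withDensity fun x => ENNReal.ofReal (φ x)

/-- An admissible weight: positive and integrable on a measurable set of positive measure. -/
structure IsPositiveWeight (μ : Measure E) (Ω : Set E) (φ : E → ℝ) : Prop where
  measurableSet : MeasurableSet Ω
  measure_ne_zero : μ Ω ≠ 0
  pos : ∀ x ∈ Ω, 0 < φ x
  integrableOn : IntegrableOn φ Ω μ

namespace IsPositiveWeight

theorem ae_pos (h : IsPositiveWeight μ Ω φ) : ∀ᵐ x ∂μ.restrict Ω, 0 < φ x :=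
  ae_restrict_of_forall_mem h.measurableSet h.pos

theorem integral_pos (h : IsPositiveWeight μ Ω φ) : 0 < ∫ x in Ω, φ x ∂μ := by
  have hsupport : Ω ⊆ Function.support φ := fun x hx => (h.pos x hx).ne'
  rw [setIntegral_pos_iff_support_of_nonneg_ae (h.ae_pos.mono fun _ hx => hx.le) h.integrableOn,
    inter_eq_right.2 hsupport]
  exact pos_iff_ne_zero.2 h.measure_ne_zero

theorem lintegral_ofReal_mul_eq (h : IsPositiveWeight μ Ω φ) (g : E → ℝ≥0∞) :
    ∫⁻ x in Ω, ENNReal.ofReal (φ x) * g x ∂μ =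
      ENNReal.ofReal (∫ x in Ω, φ x ∂μ) * ∫⁻ x, g x ∂weightMeasure μ Ω φ := by
  rw [weightMeasure, lintegral_smul_measure, smul_eq_mul, ← mul_assoc,
    ENNReal.mul_inv_cancel (ENNReal.ofReal_pos.2 h.integral_pos).ne' ENNReal.ofReal_ne_top, one_mul,
    lintegral_withDensity_eq_lintegral_mul_non_measurable₀ _
      h.integrableOn.aemeasurable.ennreal_ofReal (ae_of_all _ fun x => ENNReal.ofReal_lt_top)]
  rfl

theorem lintegral_norm_sq_mul_eq (h : IsPositiveWeight μ Ω φ) (f : E → F) :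
    ∫⁻ x in Ω, ENNReal.ofReal (‖f x‖ ^ 2 * φ x) ∂μ =
      ENNReal.ofReal (∫ x in Ω, φ x ∂μ) * ∫⁻ x, ‖f x‖ₑ ^ 2 ∂weightMeasure μ Ω φ := by
  rw [← h.lintegral_ofReal_mul_eq]
  refine lintegral_congr fun x => ?_
  rw [ENNReal.ofReal_mul (sq_nonneg _), ENNReal.ofReal_pow (norm_nonneg _), ofReal_norm, mul_comm]

theorem integral_mul_eq (h : IsPositiveWeight μ Ω φ) (f : E → ℝ) :
    ∫ x in Ω, f x * φ x ∂μ = (∫ x in Ω, φ x ∂μ) * ∫ x, f x ∂weightMeasure μ Ω φ := by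
  rw [weightMeasure, integral_smul_measure, ENNReal.toReal_inv,
    ENNReal.toReal_ofReal h.integral_pos.le, smul_eq_mul,
    mul_inv_cancel_left₀ h.integral_pos.ne',
    integral_withDensity_eq_integral_toReal_smul₀ h.integrableOn.aemeasurable.ennreal_ofReal
      (ae_of_all _ fun x => ENNReal.ofReal_lt_top)]
  refine integral_congr_ae (h.ae_pos.mono fun x hx => ?_)
  simp only [ENNReal.toReal_ofReal hx.le, smul_eq_mul, mul_comm]

theorem isProbabilityMeasure (h : IsPositiveWeight μ Ω φ) :
    IsProbabilityMeasure (weightMeasure μ Ω φ) := by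
  have hI := (ENNReal.ofReal_pos.2 h.integral_pos).ne'
  have hmass := h.lintegral_ofReal_mul_eq 1
  simp only [Pi.one_apply, mul_one, lintegral_one] at hmass
  rw [← ofReal_integral_eq_lintegral_ofReal h.integrableOn
    (h.ae_pos.mono fun _ hx => hx.le)] at hmass
  exact ⟨(ENNReal.mul_eq_left hI ENNReal.ofReal_ne_top).1 hmass.symm⟩

theorem ae_mem (h : IsPositiveWeight μ Ω φ) : ∀ᵐ x ∂weightMeasure μ Ω φ, x ∈ Ω :=
  Measure.ae_smul_measure
    ((withDensity_absolutelyContinuous _ _).ae_le (ae_restrict_mem h.measurableSet)) _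

theorem restrict_absolutelyContinuous (h : IsPositiveWeight μ Ω φ) :
    μ.restrict Ω ≪ weightMeasure μ Ω φ :=
  (withDensity_absolutelyContinuous' h.integrableOn.aemeasurable.ennreal_ofReal
    (h.ae_pos.mono fun _ hx => (ENNReal.ofReal_pos.2 hx).ne')).smul_right
      (ENNReal.inv_ne_zero.2 ENNReal.ofReal_ne_top)

end IsPositiveWeight

end WeightMeasure

section NeumannEigenvalue

variable {N m : ℕ} {Ω : Set (EuclideanSpace ℝ (Fin N))} {φ u : EuclideanSpace ℝ (Fin N) → ℝ}

theorem isContractingDomain_weightMeasure (hm : m ≠ 0) (hΩ : IsOpen Ω) (hbdd : IsBounded Ω)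
    (hφ : IsPositiveWeight volume Ω φ) (hconc : ConcaveOn ℝ Ω fun x => φ x ^ ((1 : ℝ) / m)) :
    IsContractingDomain Ω (N + m) (weightMeasure volume Ω φ) where
  isOpen := hΩ
  convex := hconc.1
  isBounded := hbdd
  ae_mem := hφ.ae_mem
  contraction := by
    have h := MeasureContraction.withDensity volume hΩ.measurableSet hconc.1 (m := m)
      (w := fun x => ENNReal.ofReal (φ x)) fun y hy x hx t ht => by
        rw [← ENNReal.ofReal_mul (inv_nonneg.2 (pow_nonneg ht.1.le m))]
        exact ENNReal.ofReal_le_ofReal <|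
          le_inv_pow_mul_lineMap_of_concaveOn_rpow hm (fun z hz => (hφ.pos z hz).le) hconc hx hy ht
    rw [finrank_euclideanSpace_fin] at h
    exact h.smul _

theorem wRayleigh_eq_lintegral_div (hφ : IsPositiveWeight volume Ω φ) :
    wRayleigh Ω φ u = (∫⁻ x, ‖fderiv ℝ u x‖ₑ ^ 2 ∂weightMeasure volume Ω φ) /
      ∫⁻ x, ‖u x‖ₑ ^ 2 ∂weightMeasure volume Ω φ := by
  rw [wRayleigh, hφ.lintegral_norm_sq_mul_eq]
  simp_rw [← sq_abs (u _), ← norm_eq_abs, hφ.lintegral_norm_sq_mul_eq]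
  exact ENNReal.mul_div_mul_left _ _ (ENNReal.ofReal_pos.2 hφ.integral_pos).ne'
    ENNReal.ofReal_ne_top

theorem wAdm_iff_memLp (hΩ : IsOpen Ω) (hφ : IsPositiveWeight volume Ω φ) :
    wAdm Ω φ u ↔ ContDiffOn ℝ 1 u Ω ∧ MemLp u 2 (weightMeasure volume Ω φ) ∧
      ∫ x, u x ∂weightMeasure volume Ω φ = 0 ∧ 0 < Var[u; weightMeasure volume Ω φ] := by
  have hI := (ENNReal.ofReal_pos.2 hφ.integral_pos).ne'
  simp_rw [wAdm, hφ.integral_mul_eq, ← sq_abs (u _), ← norm_eq_abs, hφ.lintegral_norm_sq_mul_eq,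
    mul_ne_zero_iff, mul_eq_zero, hφ.integral_pos.ne', false_or]
  simp only [Ne, ENNReal.mul_eq_top, hI, ENNReal.ofReal_ne_top, not_false_eq_true, true_and,
    false_and, or_false]
  refine and_congr_right fun hu => ?_
  have hmeas := aestronglyMeasurable_of_continuousOn hΩ.measurableSet hφ.ae_mem hu.continuousOn
  rw [← Ne, ← Ne, ← memLp_two_iff_lintegral_ne_top hmeas, and_left_comm, ← pos_iff_ne_zero]
  refine and_congr_right fun hLp => ?_
  rw [and_comm]
  refine and_congr_right fun hmean => ?_
  rw [lintegral_enorm_sq_eq_ofReal_variance hLp hmean, ENNReal.ofReal_pos]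

theorem wRayleigh_eq_ofReal_div_variance (hφ : IsPositiveWeight volume Ω φ)
    (hu : MemLp u 2 (weightMeasure volume Ω φ))
    (hdu : MemLp (fderiv ℝ u) 2 (weightMeasure volume Ω φ))
    (hmean : ∫ x, u x ∂weightMeasure volume Ω φ = 0)
    (hvar : 0 < Var[u; weightMeasure volume Ω φ]) :
    wRayleigh Ω φ u = ENNReal.ofReal ((∫ x, ‖fderiv ℝ u x‖ ^ 2 ∂weightMeasure volume Ω φ) /
      Var[u; weightMeasure volume Ω φ]) := by
  rw [wRayleigh_eq_lintegral_div hφ, lintegral_enorm_sq_eq_ofReal_integral hdu,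
    lintegral_enorm_sq_eq_ofReal_variance hu hmean, ENNReal.ofReal_div_of_pos hvar]

theorem wEV_le_ofReal_div_variance (hΩ : IsOpen Ω) (hφ : IsPositiveWeight volume Ω φ)
    (hu : ContDiffOn ℝ 1 u Ω) (huLp : MemLp u 2 (weightMeasure volume Ω φ))
    (hdu : MemLp (fderiv ℝ u) 2 (weightMeasure volume Ω φ))
    (hvar : 0 < Var[u; weightMeasure volume Ω φ]) :
    wEV Ω φ ≤ ENNReal.ofReal ((∫ x, ‖fderiv ℝ u x‖ ^ 2 ∂weightMeasure volume Ω φ) /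
      Var[u; weightMeasure volume Ω φ]) := by
  have := hφ.isProbabilityMeasure
  set P := weightMeasure volume Ω φ
  have hmean : ∫ x, (u x - ∫ y, u y ∂P) ∂P = 0 := by
    simp [integral_sub (huLp.integrable one_le_two) (integrable_const _)]
  have hLp : MemLp (fun x => u x - ∫ y, u y ∂P) 2 P := huLp.sub (memLp_const _)
  have hvar_eq := variance_sub_const huLp.1 (∫ y, u y ∂P)
  have hfderiv_eq : fderiv ℝ (fun x => u x - ∫ y, u y ∂P) = fderiv ℝ u :=
    funext fun _ => fderiv_sub_const _
  rw [← hvar_eq] at hvar ⊢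
  rw [← hfderiv_eq] at hdu ⊢
  rw [← wRayleigh_eq_ofReal_div_variance hφ hLp hdu hmean hvar]
  exact iInf₂_le _ ((wAdm_iff_memLp hΩ hφ).2 ⟨hu.sub contDiffOn_const, hLp, hmean, hvar⟩)

theorem wEV_toReal_mul_variance_le (hΩ : IsOpen Ω) (hφ : IsPositiveWeight volume Ω φ)
    (hu : ContDiffOn ℝ 1 u Ω) (huLp : MemLp u 2 (weightMeasure volume Ω φ))
    (hdu : MemLp (fderiv ℝ u) 2 (weightMeasure volume Ω φ)) :
    (wEV Ω φ).toReal * Var[u; weightMeasure volume Ω φ] ≤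
      ∫ x, ‖fderiv ℝ u x‖ ^ 2 ∂weightMeasure volume Ω φ := by
  rcases (variance_nonneg u (weightMeasure volume Ω φ)).eq_or_lt with hvar | hvar
  · rw [← hvar, mul_zero]
    exact integral_nonneg fun _ => sq_nonneg _
  · rw [← le_div_iff₀ hvar]
    exact ENNReal.toReal_le_of_le_ofReal (by positivity)
      (wEV_le_ofReal_div_variance hΩ hφ hu huLp hdu hvar)

theorem wEV_ne_top (hN : 0 < N) (hΩ : IsOpen Ω) (hbdd : IsBounded Ω)
    (hφ : IsPositiveWeight volume Ω φ) : wEV Ω φ ≠ ∞ := by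
  have := hφ.isProbabilityMeasure
  set coord : EuclideanSpace ℝ (Fin N) →L[ℝ] ℝ := EuclideanSpace.proj ⟨0, hN⟩
  have hcoord : coord ≠ 0 := fun h => by
    simpa [coord] using DFunLike.congr_fun h (EuclideanSpace.single ⟨0, hN⟩ 1)
  have hLp : MemLp coord 2 (weightMeasure volume Ω φ) := by
    obtain ⟨r, hr⟩ := hbdd.exists_norm_le
    refine .of_bound coord.continuous.aestronglyMeasurable (‖coord‖ * r) ?_
    filter_upwards [hφ.ae_mem] with x hx
    exact coord.le_opNorm_of_le (hr x hx)
  have hfderiv : fderiv ℝ coord = fun _ => coord := funext fun _ => coord.fderiv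
  have hvar : 0 < Var[coord; weightMeasure volume Ω φ] := by
    refine (variance_nonneg _ _).lt_of_ne' fun hvar => ?_
    obtain ⟨x, hx⟩ := nonempty_of_measure_ne_zero hφ.measure_ne_zero
    exact hcoord <| coord.fderiv.symm.trans <|
      fderiv_eq_zero_of_variance_eq_zero hΩ
        hφ.restrict_absolutelyContinuous coord.continuous.continuousOn hLp hvar hx
  exact ne_top_of_le_ne_top ENNReal.ofReal_ne_top <| wEV_le_ofReal_div_variance hΩ hφ
    coord.contDiff.contDiffOn hLp (hfderiv ▸ memLp_const coord) hvar

theorem isPoincareExtremal_weightMeasure (hN : 0 < N) (hΩ : IsOpen Ω) (hbdd : IsBounded Ω)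
    (hφ : IsPositiveWeight volume Ω φ) (hu : wAdm Ω φ u) (heq : wRayleigh Ω φ u = wEV Ω φ) :
    IsPoincareExtremal Ω (weightMeasure volume Ω φ) (wEV Ω φ).toReal u := by
  obtain ⟨hC, hLp, hmean, hvar⟩ := (wAdm_iff_memLp hΩ hφ).1 hu
  have htop := wEV_ne_top hN hΩ hbdd hφ
  have hdLp : MemLp (fderiv ℝ u) 2 (weightMeasure volume Ω φ) := by
    refine (memLp_two_iff_lintegral_ne_top (aestronglyMeasurable_of_continuousOn hΩ.measurableSet
      hφ.ae_mem (hC.continuousOn_fderiv_of_isOpen hΩ le_rfl))).2 fun h => htop ?_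
    rw [← heq, wRayleigh_eq_lintegral_div hφ, h, lintegral_enorm_sq_eq_ofReal_variance hLp hmean,
      ENNReal.top_div_of_ne_top ENNReal.ofReal_ne_top]
  refine ⟨hC, hLp, hdLp, ?_, fun w hw hwLp hdw => wEV_toReal_mul_variance_le hΩ hφ hw hwLp hdw⟩
  rw [← heq, wRayleigh_eq_ofReal_div_variance hφ hLp hdLp hmean hvar,
    ENNReal.toReal_ofReal (by positivity), div_mul_cancel₀ _ hvar.ne']

theorem sq_le_of_wRayleigh_eq_wEV (hN : 0 < N) (hm : m ≠ 0) (hΩ : IsOpen Ω) (hbdd : IsBounded Ω)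
    (hφ : IsPositiveWeight volume Ω φ) (hconc : ConcaveOn ℝ Ω fun x => φ x ^ ((1 : ℝ) / m))
    (hu : wAdm Ω φ u) (heq : wRayleigh Ω φ u = wEV Ω φ) :
    ∀ x ∈ Ω, u x ^ 2 ≤
      4 * (64 * (2 ^ (N + m) * Metric.diam Ω ^ 2 * (wEV Ω φ).toReal)) ^ (N + m) *
        ((∫⁻ y in Ω, ENNReal.ofReal (u y ^ 2 * φ y)).toReal / ∫ y in Ω, φ y) := by
  obtain ⟨hC, hLp, hmean, hvar⟩ := (wAdm_iff_memLp hΩ hφ).1 hu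
  have := hφ.isProbabilityMeasure
  have hae := (isPoincareExtremal_weightMeasure hN hΩ hbdd hφ hu heq).ae_sq_le
    (isContractingDomain_weightMeasure hm hΩ hbdd hφ hconc) ENNReal.toReal_nonneg hmean hvar
  have hL2 : (∫⁻ y in Ω, ENNReal.ofReal (u y ^ 2 * φ y)).toReal / ∫ y in Ω, φ y =
      ∫ y, u y ^ 2 ∂weightMeasure volume Ω φ := by
    simp_rw [← sq_abs (u _), ← norm_eq_abs, hφ.lintegral_norm_sq_mul_eq,
      lintegral_enorm_sq_eq_ofReal_integral hLp, ← ENNReal.ofReal_mul hφ.integral_pos.le]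
    rw [ENNReal.toReal_ofReal (mul_nonneg hφ.integral_pos.le (by positivity)),
      mul_div_cancel_left₀ _ hφ.integral_pos.ne']
  rw [hL2]
  exact le_of_ae_le_of_continuousOn hΩ (hC.continuousOn.pow 2)
    (hφ.restrict_absolutelyContinuous.ae_le hae)
theorem abs_le_of_sq_le_pow_mul_div {a K D M U I : ℝ} {s : ℕ} (hD : 0 ≤ D) (hM : 0 ≤ M) (hU : 0 ≤ U)
    (hI : 0 ≤ I) (hK : 0 ≤ K) (h : a ^ 2 ≤ 4 * (K * (D ^ 2 * M)) ^ s * (U / I)) :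
    |a| ≤ 2 * √(K ^ s) * M ^ ((s : ℝ) / 2) * D ^ s / √I * √U := by
  refine abs_le_of_sq_le_sq (h.trans_eq ?_) (by positivity)
  have hMsq : (M ^ ((s : ℝ) / 2)) ^ 2 = M ^ s := by
    rw [← rpow_mul_natCast hM, Nat.cast_ofNat, div_mul_cancel₀ _ two_ne_zero, rpow_natCast]
  simp only [mul_pow, div_pow, sq_sqrt hU, sq_sqrt hI, sq_sqrt (pow_nonneg hK s), hMsq]
  ring

end NeumannEigenvalue

/-- Proposition 6.1 / `ambu25`: there exists a positive constant `C`
depending only on `N + m` such that, for every open bounded convex domain `Ω ⊂ ℝ^N` with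
diameter `D` and every positive `(1/m)`-concave weight `φ ∈ L¹(Ω)`, any first eigenfunction
`ū` of `μ₁(Ω, φ)` satisfies
`‖ū‖_{L^∞(Ω)} ≤ C μ₁(Ω,φ)^{(N+m)/2} D^{N+m} / (∫_Ω φ)^{1/2} · ‖ū‖_{L²(Ω,φ)}`. -/
theorem linfty_bound_weighted_neumann_eigenfunction :
    ∀ (s : ℕ), ∃ C : ℝ, 0 < C ∧
      ∀ (N m : ℕ), 0 < N → 0 < m → N + m = s →
        ∀ Ω : Set (EuclideanSpace ℝ (Fin N)),
          IsOpen Ω → IsBounded Ω → Convex ℝ Ω → Ω.Nonempty →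
          ∀ φ : EuclideanSpace ℝ (Fin N) → ℝ,
            (∀ x ∈ Ω, 0 < φ x) → IntegrableOn φ Ω →
            ConcaveOn ℝ Ω (fun x => φ x ^ ((1 : ℝ) / m)) →
            ∀ u : EuclideanSpace ℝ (Fin N) → ℝ,
              wAdm Ω φ u → wRayleigh Ω φ u = wEV Ω φ →
              ∀ x ∈ Ω,
                |u x| ≤ C * (wEV Ω φ).toReal ^ (((N : ℝ) + m) / 2) *
                    Metric.diam Ω ^ (N + m) / Real.sqrt (∫ y in Ω, φ y) *
                    Real.sqrt (∫⁻ y in Ω, ENNReal.ofReal ((u y) ^ 2 * φ y)).toReal := by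
  intro s
  refine ⟨2 * √((64 * 2 ^ s) ^ s), by positivity, ?_⟩
  rintro N m hN hm rfl Ω hΩ hbdd - hne φ hpos hint hconc u hu heq x hx
  have hφ : IsPositiveWeight volume Ω φ :=
    ⟨hΩ.measurableSet, (hΩ.measure_pos volume hne).ne', hpos, hint⟩
  have hsq := sq_le_of_wRayleigh_eq_wEV hN hm.ne' hΩ hbdd hφ hconc hu heq x hx
  rw [mul_assoc (2 ^ (N + m)), ← mul_assoc 64] at hsq
  rw [← Nat.cast_add]
  exact abs_le_of_sq_le_pow_mul_div Metric.diam_nonneg ENNReal.toReal_nonneg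
    ENNReal.toReal_nonneg hφ.integral_pos.le (by positivity) hsq
end
end
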